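/- arXiv:1206.0411 — 2 statements merged into one kernel-verified Lean document; each statement's English description precedes it below -/
import Mathlib

section
/- For every involution j of Ree(q), the centralizer of j in Ree(q) is isomorphic to the direct product (Z/2Z) × PSL(2, q) and has order q(q^2 − 1). -/
open Matrix

noncomputable section

namespace ReePaper

variable {F : Type*} [Field F] [Fintype F]

/-- The matrix `α(x)`. -/
def amat (t : ℕ) (x : F) : Matrix (Fin 7) (Fin 7) F :=
  !![1, x^t, 0, 0, -x^(3*t+1), -x^(3*t+2), x^(4*t+2);
     0, 1, x, x^(t+1), -x^(2*t+1), 0, -x^(3*t+2);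
     0, 0, 1, x^t, -x^(2*t), 0, x^(3*t+1);
     0, 0, 0, 1, x^t, 0, 0;
     0, 0, 0, 0, 1, -x, x^(t+1);
     0, 0, 0, 0, 0, 1, -x^t;
     0, 0, 0, 0, 0, 0, 1]

/-- The matrix `β(x)`. -/
def bmat (t : ℕ) (x : F) : Matrix (Fin 7) (Fin 7) F :=
  !![1, 0, -x^t, 0, -x, 0, -x^(t+1);
     0, 1, 0, x^t, 0, -x^(2*t), 0;
     0, 0, 1, 0, 0, 0, x;
     0, 0, 0, 1, 0, x^t, 0;
     0, 0, 0, 0, 1, 0, x^t;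
     0, 0, 0, 0, 0, 1, 0;
     0, 0, 0, 0, 0, 0, 1]

/-- The matrix `γ(x)`. -/
def cmat (t : ℕ) (x : F) : Matrix (Fin 7) (Fin 7) F :=
  !![1, 0, 0, -x^t, 0, -x, -x^(2*t);
     0, 1, 0, 0, -x^t, 0, x;
     0, 0, 1, 0, 0, x^t, 0;
     0, 0, 0, 1, 0, 0, -x^t;
     0, 0, 0, 0, 1, 0, 0;
     0, 0, 0, 0, 0, 1, 0;
     0, 0, 0, 0, 0, 0, 1]

/-- The diagonal matrix `h(λ)`. -/
def hmat (t : ℕ) (l : Fˣ) : Matrix (Fin 7) (Fin 7) F :=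
  Matrix.diagonal ![((l ^ (t : ℤ) : Fˣ) : F), ((l ^ (1 - (t : ℤ)) : Fˣ) : F),
    ((l ^ (2 * (t : ℤ) - 1) : Fˣ) : F), 1, ((l ^ (1 - 2 * (t : ℤ)) : Fˣ) : F),
    ((l ^ ((t : ℤ) - 1) : Fˣ) : F), ((l ^ (-(t : ℤ)) : Fˣ) : F)]

/-- The matrix `Υ`, the antidiagonal matrix with all entries `-1`. -/
def ups : Matrix (Fin 7) (Fin 7) F :=
  !![0, 0, 0, 0, 0, 0, -1;
     0, 0, 0, 0, 0, -1, 0;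
     0, 0, 0, 0, -1, 0, 0;
     0, 0, 0, -1, 0, 0, 0;
     0, 0, -1, 0, 0, 0, 0;
     0, -1, 0, 0, 0, 0, 0;
     -1, 0, 0, 0, 0, 0, 0]

/-- `S(a, b, c) = α(a) β(b) γ(c)`. -/
def Smat (t : ℕ) (a b c : F) : Matrix (Fin 7) (Fin 7) F :=
  amat t a * bmat t b * cmat t c

/-- The Ree group `Ree(q) = ⟨α(x), β(x), γ(x), h(λ), Υ⟩ ≤ GL(7, q)`. -/
def ReeGroup (t : ℕ) : Subgroup (GL (Fin 7) F) :=
  Subgroup.closure {g : GL (Fin 7) F |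
    (∃ x : F, (g : Matrix (Fin 7) (Fin 7) F) = amat t x) ∨
    (∃ x : F, (g : Matrix (Fin 7) (Fin 7) F) = bmat t x) ∨
    (∃ x : F, (g : Matrix (Fin 7) (Fin 7) F) = cmat t x) ∨
    (∃ l : Fˣ, (g : Matrix (Fin 7) (Fin 7) F) = hmat t l) ∨
    (g : Matrix (Fin 7) (Fin 7) F) = ups}

/-- The subgroup `U(q) = ⟨α(x), β(x), γ(x)⟩`. -/
def Usub (t : ℕ) : Subgroup (GL (Fin 7) F) :=
  Subgroup.closure {g : GL (Fin 7) F |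
    (∃ x : F, (g : Matrix (Fin 7) (Fin 7) F) = amat t x) ∨
    (∃ x : F, (g : Matrix (Fin 7) (Fin 7) F) = bmat t x) ∨
    (∃ x : F, (g : Matrix (Fin 7) (Fin 7) F) = cmat t x)}

/-- The subgroup `H(q) = {h(λ) : λ ∈ F_q^×}`. -/
def Hsub (t : ℕ) : Subgroup (GL (Fin 7) F) :=
  Subgroup.closure {g : GL (Fin 7) F |
    ∃ l : Fˣ, (g : Matrix (Fin 7) (Fin 7) F) = hmat t l}

end ReePaper

open ReePaper

/-!
Let `σ` be an endomorphism of `F` with `σ (σ x) = x ^ 3`. The Ree group preserves the product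
`cross` on `F⁷` that is invariant under `G₂` and, up to a twist by `σ`, the partial product
`twistedCross`; hence it permutes the absolute points of a polarity of the `G₂` hexagon. The only
absolute point with first coordinate zero is `⟨e₆⟩`. The unipotent elements fix it and are
transitive on the others, and an element that fixes both `⟨e₀⟩` and `⟨e₆⟩` lies in the torus.

If an involution fixes `⟨e₆⟩`, it is a torus element times an element of order dividing 9, so the
torus part is `h(-1)` and the two involutions, having a product of odd order, are conjugate.
Otherwise it is conjugate to some `h(κ) Υ`, and, as `κ` or `-κ` is a square, to `Υ` or `h(-1) Υ`,
which are both conjugate to `h(-1)`.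

The space of row vectors that `h(-1)` negates is given by the vanishing of coordinates 1, 3 and 5,
and contains `e₀` and `e₆`. An element commuting with `h(-1)` preserves it, so the absolute points
to which it moves `⟨e₀⟩` and `⟨e₆⟩` can be moved back by some `β(b)` and `Υ` alone. Hence the
centralizer is the product of `⟨h(-1)⟩` and the image of a homomorphism from `SL(2, F)` to the Ree
group whose kernel is the center.
-/

namespace Ree

section Group

variable {G : Type*} [Group G]

/-- Two elements of `G` are conjugate under the subgroup `K`, which need not contain them. -/
def IsConjUnder (K : Subgroup G) (x y : G) : Prop :=
  ∃ k ∈ K, SemiconjBy k x y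

theorem IsConjUnder.trans {K : Subgroup G} {x y z : G} (hxy : IsConjUnder K x y)
    (hyz : IsConjUnder K y z) : IsConjUnder K x z := by
  obtain ⟨k, hk, hkxy⟩ := hxy
  obtain ⟨l, hl, hlyz⟩ := hyz
  exact ⟨l * k, K.mul_mem hl hk, hlyz.mul_left hkxy⟩

theorem isConjUnder_inv_mul_mul {K : Subgroup G} {k : G} (hk : k ∈ K) (x : G) :
    IsConjUnder K x (k⁻¹ * x * k) :=
  ⟨k⁻¹, K.inv_mem hk, by simp [SemiconjBy, mul_assoc]⟩

theorem isConjUnder_of_involutions {K : Subgroup G} {s v : G} {n : ℕ} (hv : v ∈ K)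
    (hs : s * s = 1) (hsv : s * v * (s * v) = 1) (hn : v ^ (2 * n + 1) = 1) :
    IsConjUnder K (s * v) s := by
  refine ⟨v ^ (n + 1), K.pow_mem hv _, ?_⟩
  have hinv : SemiconjBy s v⁻¹ v := by
    rw [SemiconjBy, mul_inv_eq_iff_eq_mul, eq_comm, ← mul_left_cancel_iff (a := s), hs]
    simpa only [mul_assoc] using hsv
  have hpow : v⁻¹ ^ (n + 1) * v = v ^ (n + 1) := by
    rw [inv_pow, inv_mul_eq_iff_eq_mul, ← pow_add, show n + 1 + (n + 1) = 2 * n + 1 + 1 by lia,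
      pow_succ, hn, one_mul]
  rw [SemiconjBy, ← mul_assoc, ← (hinv.pow_right (n + 1)).eq, mul_assoc, hpow]

theorem IsConjUnder.nonempty_inf_centralizer_mulEquiv {K : Subgroup G} {x y : G}
    (h : IsConjUnder K x y) :
    Nonempty (↥(K ⊓ Subgroup.centralizer {x}) ≃* ↥(K ⊓ Subgroup.centralizer {y})) := by
  obtain ⟨k, hk, hkxy⟩ := h
  have hy : k⁻¹ * y * k = x := by rw [mul_assoc, ← hkxy.eq, inv_mul_cancel_left]
  have hmap : (K ⊓ Subgroup.centralizer {x}).map (MulAut.conj k).toMonoidHom =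
      K ⊓ Subgroup.centralizer {y} := by
    ext g
    simp only [Subgroup.mem_map_equiv, Subgroup.mem_inf, MulAut.conj_symm_apply,
      Subgroup.mem_centralizer_singleton_iff, ← hy]
    refine and_congr ?_ ?_
    · rw [K.mul_mem_cancel_right hk, K.mul_mem_cancel_left (K.inv_mem hk)]
    · rw [← mul_right_inj k, ← mul_left_inj k⁻¹]
      simp [mul_assoc]
  exact ⟨((MulAut.conj k).subgroupMap _).trans (MulEquiv.subgroupCongr hmap)⟩

theorem nonempty_sup_mulEquiv_prod {H K : Subgroup G} (hdisj : Disjoint H K)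
    (hcomm : ∀ h ∈ H, ∀ k ∈ K, Commute h k) : Nonempty (↥(H ⊔ K) ≃* H × K) := by
  have hcomm' (h : H) (k : K) : Commute (H.subtype h) (K.subtype k) := hcomm h h.2 k k.2
  have hinj : Function.Injective (H.subtype.noncommCoprod K.subtype hcomm') := by
    rw [MonoidHom.noncommCoprod_injective, H.range_subtype, K.range_subtype]
    exact ⟨H.subtype_injective, K.subtype_injective, hdisj⟩
  have hrange : (H.subtype.noncommCoprod K.subtype hcomm').range = H ⊔ K := by
    rw [MonoidHom.noncommCoprod_range, H.range_subtype, K.range_subtype]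
  exact ⟨((MonoidHom.ofInjective hinj).trans (MulEquiv.subgroupCongr hrange)).symm⟩

theorem disjoint_zpowers_of_notMem {K : Subgroup G} {s : G} (hs : (orderOf s).Prime)
    (hsK : s ∉ K) : Disjoint (Subgroup.zpowers s) K := by
  have : Fact (orderOf s).Prime := ⟨hs⟩
  refine Subgroup.disjoint_def.2 fun {x} hx hxK => by_contra fun hx1 => hsK ?_
  obtain ⟨n, hn⟩ := mem_zpowers_of_prime_card (Nat.card_zpowers s) (g := ⟨x, hx⟩)
    (g' := ⟨s, Subgroup.mem_zpowers s⟩) (by simpa using hx1)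
  obtain rfl : x ^ n = s := congrArg Subtype.val hn
  exact K.zpow_mem hxK n

theorem nonempty_zpowers_sup_range_mulEquiv {S : Type*} [Group S] {φ : S →* G} {s : G}
    (hdisj : Disjoint (Subgroup.zpowers s) φ.range) (hcomm : ∀ a, Commute s (φ a)) :
    Nonempty (↥(Subgroup.zpowers s ⊔ φ.range) ≃*
      Multiplicative (ZMod (orderOf s)) × (S ⧸ φ.ker)) := by
  obtain ⟨e⟩ := nonempty_sup_mulEquiv_prod hdisj (by
    rintro _ ⟨n, rfl⟩ _ ⟨a, rfl⟩
    exact (hcomm a).zpow_left n)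
  have cyclic := zmodCyclicMulEquiv (G := Subgroup.zpowers s) inferInstance
  rw [Nat.card_zpowers] at cyclic
  exact ⟨e.trans (cyclic.symm.prodCongr (QuotientGroup.quotientKerEquivRange φ).symm)⟩

end Group

section Unitriangular

variable {R ι : Type*} [CommRing R] [Fintype ι] [LinearOrder ι] {M N : Matrix ι ι R}

/-- Upper triangular matrices with ones on the diagonal. -/
structure IsUnitriangular (M : Matrix ι ι R) : Prop where
  isUpperTriangular : M.IsUpperTriangular
  diag_eq_one : ∀ i, M i i = 1

theorem IsUnitriangular.mul (hM : IsUnitriangular M) (hN : IsUnitriangular N) :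
    IsUnitriangular (M * N) where
  isUpperTriangular := hM.isUpperTriangular.mul hN.isUpperTriangular
  diag_eq_one i := by
    rw [mul_apply, Finset.sum_eq_single i, hM.diag_eq_one, hN.diag_eq_one, one_mul]
    · intro j _ hji
      rcases hji.lt_or_gt with hji | hij
      · rw [hM.isUpperTriangular hji, zero_mul]
      · rw [hN.isUpperTriangular hij, mul_zero]
    · simp

theorem IsUnitriangular.det_eq_one (hM : IsUnitriangular M) : M.det = 1 := by
  simp [det_of_isUpperTriangular hM.isUpperTriangular, hM.diag_eq_one]

theorem IsUnitriangular.pow_eq_one [Nonempty ι] (hM : IsUnitriangular M) (p : ℕ) [Fact p.Prime]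
    [CharP R p] {k : ℕ} (hk : Fintype.card ι ≤ p ^ k) : M ^ p ^ k = 1 := by
  have hcharpoly : M.charpoly = (Polynomial.X - 1) ^ Fintype.card ι := by
    simp [charpoly_of_isUpperTriangular M hM.isUpperTriangular, hM.diag_eq_one]
  have hnil : (M - 1) ^ Fintype.card ι = 0 := by
    simpa [hcharpoly] using M.aeval_self_charpoly
  rw [← sub_eq_zero, ← one_pow (p ^ k), ← sub_pow_char_pow_of_commute p k (.one_right M)]
  exact pow_eq_zero_of_le hk hnil

end Unitriangular

variable {F : Type*} [Field F]

/-- A Tits endomorphism in characteristic three: a square root of the Frobenius endomorphism. -/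
def IsTits (σ : F →+* F) : Prop :=
  ∀ x, σ (σ x) = x ^ 3

section Products

/-- The bilinear product on the seven-dimensional module that is invariant under `G₂`. -/
def cross (x y : Fin 7 → F) : Fin 7 → F :=
  ![(x 1 * y 2 - x 2 * y 1) - (x 0 * y 3 - x 3 * y 0),
    (x 0 * y 4 - x 4 * y 0) + (x 1 * y 3 - x 3 * y 1),
    (x 2 * y 3 - x 3 * y 2) - (x 0 * y 5 - x 5 * y 0),
    (x 1 * y 5 - x 5 * y 1) + (x 2 * y 4 - x 4 * y 2) - (x 0 * y 6 - x 6 * y 0),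
    (x 3 * y 4 - x 4 * y 3) - (x 1 * y 6 - x 6 * y 1),
    (x 2 * y 6 - x 6 * y 2) + (x 3 * y 5 - x 5 * y 3),
    (x 4 * y 5 - x 5 * y 4) - (x 3 * y 6 - x 6 * y 3)]

/-- The alternating product that the Ree group transforms by the twist of the seven-dimensional
module by `σ`, but only on the pairs `x, y` with `cross x y = 0`. -/
def twistedCross (x y : Fin 7 → F) : Fin 7 → F :=
  ![x 0 * y 1 - x 1 * y 0,
    x 0 * y 2 - x 2 * y 0,
    -(x 1 * y 4 - x 4 * y 1),
    (x 0 * y 6 - x 6 * y 0) + (x 1 * y 5 - x 5 * y 1),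
    -(x 2 * y 5 - x 5 * y 2),
    x 4 * y 6 - x 6 * y 4,
    x 5 * y 6 - x 6 * y 5]

/-- The matrices preserving `cross`, and `twistedCross` up to the twist by `σ`. Vectors are rows,
on which matrices act from the right. -/
structure PreservesProducts (σ : F →+* F) (M : Matrix (Fin 7) (Fin 7) F) : Prop where
  cross_vecMul : ∀ x y, cross (x ᵥ* M) (y ᵥ* M) = cross x y ᵥ* M
  twistedCross_vecMul : ∀ {x y}, cross x y = 0 →
    twistedCross (x ᵥ* M) (y ᵥ* M) = twistedCross x y ᵥ* M.map σ

variable {σ : F →+* F} {M N : Matrix (Fin 7) (Fin 7) F}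

theorem PreservesProducts.mul (hM : PreservesProducts σ M) (hN : PreservesProducts σ N) :
    PreservesProducts σ (M * N) where
  cross_vecMul x y := by
    simp only [← vecMul_vecMul, hN.cross_vecMul, hM.cross_vecMul]
  twistedCross_vecMul {x y} hxy := by
    have hM0 : cross (x ᵥ* M) (y ᵥ* M) = 0 := by rw [hM.cross_vecMul, hxy, zero_vecMul]
    simp only [← vecMul_vecMul, hN.twistedCross_vecMul hM0, hM.twistedCross_vecMul hxy,
      Matrix.map_mul]

theorem PreservesProducts.of_mul_eq_one (hM : PreservesProducts σ M) (hMN : M * N = 1) :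
    PreservesProducts σ N := by
  have hNM : N * M = 1 := mul_eq_one_comm.1 hMN
  have hcross (x y : Fin 7 → F) : cross (x ᵥ* N) (y ᵥ* N) = cross x y ᵥ* N := by
    have h := hM.cross_vecMul (x ᵥ* N) (y ᵥ* N)
    simp only [vecMul_vecMul, hNM, vecMul_one] at h
    rw [h, vecMul_vecMul, hMN, vecMul_one]
  refine ⟨hcross, fun {x y} hxy => ?_⟩
  have h := hM.twistedCross_vecMul (x := x ᵥ* N) (y := y ᵥ* N) (by rw [hcross, hxy, zero_vecMul])
  simp only [vecMul_vecMul, hNM, vecMul_one] at h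
  rw [h, vecMul_vecMul, ← Matrix.map_mul, hMN, Matrix.map_one _ σ.map_zero σ.map_one, vecMul_one]

/-- The subgroup of `GL (Fin 7) F` preserving both products; it contains the Ree group. -/
def productStabilizer (σ : F →+* F) : Subgroup (GL (Fin 7) F) where
  carrier := {g | PreservesProducts σ g.1}
  one_mem' := ⟨by simp, by simp⟩
  mul_mem' := PreservesProducts.mul
  inv_mem' hg := hg.of_mul_eq_one (by simp)

end Products

section Generators

variable (σ : F →+* F)

/-- The matrix `α(σ u)` of the paper: `u` is the `t`-th power of its argument. The same
reparametrization is used for `β`, `γ` and `h`. -/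
def alphaMatrix (u : F) : Matrix (Fin 7) (Fin 7) F :=
  !![1, u, 0, 0, -(u ^ 3 * σ u), -(u ^ 3 * σ u ^ 2), u ^ 4 * σ u ^ 2;
     0, 1, σ u, u * σ u, -(u ^ 2 * σ u), 0, -(u ^ 3 * σ u ^ 2);
     0, 0, 1, u, -u ^ 2, 0, u ^ 3 * σ u;
     0, 0, 0, 1, u, 0, 0;
     0, 0, 0, 0, 1, -σ u, u * σ u;
     0, 0, 0, 0, 0, 1, -u;
     0, 0, 0, 0, 0, 0, 1]

/-- The matrix `β(σ u)` of the paper. -/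
def betaMatrix (u : F) : Matrix (Fin 7) (Fin 7) F :=
  !![1, 0, -u, 0, -σ u, 0, -(u * σ u);
     0, 1, 0, u, 0, -u ^ 2, 0;
     0, 0, 1, 0, 0, 0, σ u;
     0, 0, 0, 1, 0, u, 0;
     0, 0, 0, 0, 1, 0, u;
     0, 0, 0, 0, 0, 1, 0;
     0, 0, 0, 0, 0, 0, 1]

/-- The matrix `γ(σ u)` of the paper. -/
def gammaMatrix (u : F) : Matrix (Fin 7) (Fin 7) F :=
  !![1, 0, 0, -u, 0, -σ u, -u ^ 2;
     0, 1, 0, 0, -u, 0, σ u;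
     0, 0, 1, 0, 0, u, 0;
     0, 0, 0, 1, 0, 0, -u;
     0, 0, 0, 0, 1, 0, 0;
     0, 0, 0, 0, 0, 1, 0;
     0, 0, 0, 0, 0, 0, 1]

/-- The matrix `h(σ κ)` of the paper. -/
def torusMatrix (κ : F) : Matrix (Fin 7) (Fin 7) F :=
  diagonal ![κ, σ κ * κ⁻¹, κ ^ 2 * (σ κ)⁻¹, 1, σ κ * κ⁻¹ ^ 2, κ * (σ κ)⁻¹, κ⁻¹]

theorem vecMul_alphaMatrix (u : F) (x : Fin 7 → F) : x ᵥ* alphaMatrix σ u =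
    ![x 0, x 0 * u + x 1, x 1 * σ u + x 2, x 1 * (u * σ u) + x 2 * u + x 3,
      -(x 0 * (u ^ 3 * σ u)) - x 1 * (u ^ 2 * σ u) - x 2 * u ^ 2 + x 3 * u + x 4,
      -(x 0 * (u ^ 3 * σ u ^ 2)) - x 4 * σ u + x 5,
      x 0 * (u ^ 4 * σ u ^ 2) - x 1 * (u ^ 3 * σ u ^ 2) + x 2 * (u ^ 3 * σ u) + x 4 * (u * σ u)
        - x 5 * u + x 6] := by
  ext i
  fin_cases i <;> simp [alphaMatrix, vecMul, dotProduct, Fin.sum_univ_succ] <;> ring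

theorem vecMul_betaMatrix (u : F) (x : Fin 7 → F) : x ᵥ* betaMatrix σ u =
    ![x 0, x 1, -(x 0 * u) + x 2, x 1 * u + x 3, -(x 0 * σ u) + x 4,
      -(x 1 * u ^ 2) + x 3 * u + x 5, -(x 0 * (u * σ u)) + x 2 * σ u + x 4 * u + x 6] := by
  ext i
  fin_cases i <;> simp [betaMatrix, vecMul, dotProduct, Fin.sum_univ_succ] <;> ring

theorem vecMul_gammaMatrix (u : F) (x : Fin 7 → F) : x ᵥ* gammaMatrix σ u =
    ![x 0, x 1, x 2, -(x 0 * u) + x 3, -(x 1 * u) + x 4, -(x 0 * σ u) + x 2 * u + x 5,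
      -(x 0 * u ^ 2) + x 1 * σ u - x 3 * u + x 6] := by
  ext i
  fin_cases i <;> simp [gammaMatrix, vecMul, dotProduct, Fin.sum_univ_succ] <;> ring

theorem vecMul_torusMatrix (κ : F) (x : Fin 7 → F) : x ᵥ* torusMatrix σ κ =
    ![x 0 * κ, x 1 * (σ κ * κ⁻¹), x 2 * (κ ^ 2 * (σ κ)⁻¹), x 3, x 4 * (σ κ * κ⁻¹ ^ 2),
      x 5 * (κ * (σ κ)⁻¹), x 6 * κ⁻¹] := by
  ext i
  rw [torusMatrix, vecMul_diagonal]
  fin_cases i <;> simp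

theorem vecMul_ups (x : Fin 7 → F) :
    x ᵥ* ups = ![-x 6, -x 5, -x 4, -x 3, -x 2, -x 1, -x 0] := by
  ext i
  fin_cases i <;> simp [ups, vecMul, dotProduct, Fin.sum_univ_succ]

end Generators

section Preservation

theorem cross_eq_zero_iff {x y : Fin 7 → F} : cross x y = 0 ↔
    (x 1 * y 2 - x 2 * y 1) - (x 0 * y 3 - x 3 * y 0) = 0 ∧
    (x 0 * y 4 - x 4 * y 0) + (x 1 * y 3 - x 3 * y 1) = 0 ∧
    (x 2 * y 3 - x 3 * y 2) - (x 0 * y 5 - x 5 * y 0) = 0 ∧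
    (x 1 * y 5 - x 5 * y 1) + (x 2 * y 4 - x 4 * y 2) - (x 0 * y 6 - x 6 * y 0) = 0 ∧
    (x 3 * y 4 - x 4 * y 3) - (x 1 * y 6 - x 6 * y 1) = 0 ∧
    (x 2 * y 6 - x 6 * y 2) + (x 3 * y 5 - x 5 * y 3) = 0 ∧
    (x 4 * y 5 - x 5 * y 4) - (x 3 * y 6 - x 6 * y 3) = 0 := by
  simp [cross, funext_iff, Fin.forall_fin_succ]

variable {σ : F →+* F}

section CharThree

variable [CharP F 3]

theorem preservesProducts_alphaMatrix (hσ : IsTits σ) (u : F) :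
    PreservesProducts σ (alphaMatrix σ u) := by
  have hmap : (alphaMatrix σ u).map σ = alphaMatrix σ (σ u) := by
    simp [alphaMatrix, ← Matrix.ext_iff, Fin.forall_fin_succ]
  refine ⟨fun x y => ?_, fun {x y} hxy => ?_⟩
  · simp only [vecMul_alphaMatrix]
    ext i
    fin_cases i <;> dsimp [cross] <;> grind
  · -- Modulo 3, the two sides differ by combinations of the coordinates of `cross x y`.
    obtain ⟨c0, c1, c2, c3, c4, c5, c6⟩ := cross_eq_zero_iff.1 hxy
    simp only [hmap, vecMul_alphaMatrix, hσ u]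
    ext i
    fin_cases i <;> dsimp [twistedCross] <;> grind

theorem preservesProducts_betaMatrix (hσ : IsTits σ) (u : F) :
    PreservesProducts σ (betaMatrix σ u) := by
  have hmap : (betaMatrix σ u).map σ = betaMatrix σ (σ u) := by
    simp [betaMatrix, ← Matrix.ext_iff, Fin.forall_fin_succ]
  refine ⟨fun x y => ?_, fun {x y} hxy => ?_⟩
  · simp only [vecMul_betaMatrix]
    ext i
    fin_cases i <;> dsimp [cross] <;> grind
  · obtain ⟨c0, c1, c2, c3, c4, -, c6⟩ := cross_eq_zero_iff.1 hxy
    simp only [hmap, vecMul_betaMatrix, hσ u]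
    ext i
    fin_cases i <;> dsimp [twistedCross] <;> grind

theorem preservesProducts_gammaMatrix (hσ : IsTits σ) (u : F) :
    PreservesProducts σ (gammaMatrix σ u) := by
  have hmap : (gammaMatrix σ u).map σ = gammaMatrix σ (σ u) := by
    simp [gammaMatrix, ← Matrix.ext_iff, Fin.forall_fin_succ]
  refine ⟨fun x y => ?_, fun {x y} hxy => ?_⟩
  · simp only [vecMul_gammaMatrix]
    ext i
    fin_cases i <;> dsimp [cross] <;> grind
  · obtain ⟨c0, c1, c2, -, c4, c5, -⟩ := cross_eq_zero_iff.1 hxy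
    simp only [hmap, vecMul_gammaMatrix, hσ u]
    ext i
    fin_cases i <;> dsimp [twistedCross] <;> grind

end CharThree

theorem preservesProducts_torusMatrix (hσ : IsTits σ) {κ : F} (hκ : κ ≠ 0) :
    PreservesProducts σ (torusMatrix σ κ) := by
  have hσκ : σ κ ≠ 0 := by simpa using hκ
  have hmap : (torusMatrix σ κ).map σ = torusMatrix σ (σ κ) := by
    simp [torusMatrix, ← Matrix.ext_iff, Fin.forall_fin_succ]
  refine ⟨fun x y => ?_, fun {x y} _ => ?_⟩
  · simp only [vecMul_torusMatrix]
    ext i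
    fin_cases i <;> dsimp [cross] <;> field_simp
  · simp only [hmap, vecMul_torusMatrix, hσ κ]
    ext i
    fin_cases i <;> dsimp [twistedCross] <;> field_simp

theorem preservesProducts_ups : PreservesProducts σ ups := by
  have hmap : (ups : Matrix (Fin 7) (Fin 7) F).map σ = ups := by
    simp [ups, ← Matrix.ext_iff, Fin.forall_fin_succ]
  refine ⟨fun x y => ?_, fun {x y} _ => ?_⟩
  · simp only [vecMul_ups]
    ext i
    fin_cases i <;> dsimp [cross] <;> ring
  · simp only [hmap, vecMul_ups]
    ext i
    fin_cases i <;> simp [twistedCross]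
    ring

end Preservation

section Elements

variable (σ : F →+* F)

theorem isUnitriangular_alphaMatrix (u : F) : IsUnitriangular (alphaMatrix σ u) := by
  constructor
  · intro i j hij
    fin_cases i <;> fin_cases j <;> first | rfl | exact absurd hij (by decide)
  · intro i
    fin_cases i <;> rfl

theorem isUnitriangular_betaMatrix (u : F) : IsUnitriangular (betaMatrix σ u) := by
  constructor
  · intro i j hij
    fin_cases i <;> fin_cases j <;> first | rfl | exact absurd hij (by decide)
  · intro i
    fin_cases i <;> rfl

theorem isUnitriangular_gammaMatrix (u : F) : IsUnitriangular (gammaMatrix σ u) := by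
  constructor
  · intro i j hij
    fin_cases i <;> fin_cases j <;> first | rfl | exact absurd hij (by decide)
  · intro i
    fin_cases i <;> rfl

/-- `alphaMatrix σ u` as an element of `GL (Fin 7) F`. -/
def alpha (u : F) : GL (Fin 7) F :=
  .mkOfDetNeZero (alphaMatrix σ u) ((isUnitriangular_alphaMatrix σ u).det_eq_one ▸ one_ne_zero)

@[simp]
theorem val_alpha (u : F) : (alpha σ u).1 = alphaMatrix σ u := rfl

/-- `betaMatrix σ u` as an element of `GL (Fin 7) F`. -/
def beta (u : F) : GL (Fin 7) F :=
  .mkOfDetNeZero (betaMatrix σ u) ((isUnitriangular_betaMatrix σ u).det_eq_one ▸ one_ne_zero)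

@[simp]
theorem val_beta (u : F) : (beta σ u).1 = betaMatrix σ u := rfl

/-- `gammaMatrix σ u` as an element of `GL (Fin 7) F`. -/
def gamma (u : F) : GL (Fin 7) F :=
  .mkOfDetNeZero (gammaMatrix σ u) ((isUnitriangular_gammaMatrix σ u).det_eq_one ▸ one_ne_zero)

@[simp]
theorem val_gamma (u : F) : (gamma σ u).1 = gammaMatrix σ u := rfl

theorem torusMatrix_mul_torusMatrix (κ μ : F) :
    torusMatrix σ κ * torusMatrix σ μ = torusMatrix σ (κ * μ) := by
  rw [torusMatrix, torusMatrix, torusMatrix, diagonal_mul_diagonal]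
  congr 1
  ext i
  fin_cases i <;> simp <;> ring

theorem torusMatrix_one : torusMatrix σ 1 = 1 := by
  rw [← diagonal_one, torusMatrix]
  congr 1
  ext i
  fin_cases i <;> simp

/-- The torus `κ ↦ h(σ κ)`. -/
def torus : Fˣ →* GL (Fin 7) F where
  toFun κ := ⟨torusMatrix σ κ, torusMatrix σ ↑κ⁻¹,
    by simp [torusMatrix_mul_torusMatrix, torusMatrix_one],
    by simp [torusMatrix_mul_torusMatrix, torusMatrix_one]⟩
  map_one' := Units.ext (torusMatrix_one σ)
  map_mul' κ μ := Units.ext (torusMatrix_mul_torusMatrix σ κ μ).symm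

@[simp]
theorem val_torus (κ : Fˣ) : (torus σ κ).1 = torusMatrix σ κ := rfl

theorem ups_mul_ups : (ups * ups : Matrix (Fin 7) (Fin 7) F) = 1 := by
  simp [ups, ← Matrix.ext_iff, Fin.forall_fin_succ]

variable (F) in
/-- `Υ` as an element of `GL (Fin 7) F`. -/
def weyl : GL (Fin 7) F :=
  ⟨ups, ups, ups_mul_ups, ups_mul_ups⟩

@[simp]
theorem val_weyl : (weyl F).1 = ups := rfl

/-- The Ree group of a Tits endomorphism `σ`. For `F = 𝔽_q`, `q = 3 ^ (2 * m + 1)`, it is `Ree(q)`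
when `σ x = x ^ 3 ^ (m + 1)`. -/
def group : Subgroup (GL (Fin 7) F) :=
  Subgroup.closure (Set.range (alpha σ) ∪ Set.range (beta σ) ∪ Set.range (gamma σ) ∪
    Set.range (torus σ) ∪ {weyl F})

variable {σ}

theorem group_le_iff {K : Subgroup (GL (Fin 7) F)} : group σ ≤ K ↔
    (∀ u, alpha σ u ∈ K) ∧ (∀ u, beta σ u ∈ K) ∧ (∀ u, gamma σ u ∈ K) ∧
      (∀ κ, torus σ κ ∈ K) ∧ weyl F ∈ K := by
  rw [group, Subgroup.closure_le]
  simp only [Set.union_subset_iff, Set.range_subset_iff, Set.singleton_subset_iff, SetLike.mem_coe,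
    and_assoc]

theorem alpha_mem_group (u : F) : alpha σ u ∈ group σ := (group_le_iff.1 le_rfl).1 u

theorem beta_mem_group (u : F) : beta σ u ∈ group σ := (group_le_iff.1 le_rfl).2.1 u

theorem gamma_mem_group (u : F) : gamma σ u ∈ group σ := (group_le_iff.1 le_rfl).2.2.1 u

theorem torus_mem_group (κ : Fˣ) : torus σ κ ∈ group σ := (group_le_iff.1 le_rfl).2.2.2.1 κ

theorem weyl_mem_group : weyl F ∈ group σ := (group_le_iff.1 le_rfl).2.2.2.2

theorem group_le_productStabilizer [CharP F 3] (hσ : IsTits σ) :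
    group σ ≤ productStabilizer σ :=
  group_le_iff.2 ⟨preservesProducts_alphaMatrix hσ, preservesProducts_betaMatrix hσ,
    preservesProducts_gammaMatrix hσ, fun κ => preservesProducts_torusMatrix hσ κ.ne_zero,
    preservesProducts_ups⟩

end Elements

section AbsolutePoints

variable {σ : F →+* F} {x : Fin 7 → F}

/-- The vectors spanning the absolute points of the polarity of the generalized hexagon of `G₂(F)`
that is attached to `σ`, scaled so that no factor appears in the second equation; the Ree group
acts on them. The zero vector is included. -/
def IsAbsolute (σ : F →+* F) (x : Fin 7 → F) : Prop :=
  ∃ y, cross x y = 0 ∧ twistedCross x y = σ ∘ x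

theorem isAbsolute_single_zero : IsAbsolute σ (Pi.single 0 1) :=
  ⟨Pi.single 1 1, by simp [cross, funext_iff, Fin.forall_fin_succ],
    by simp [twistedCross, funext_iff, Fin.forall_fin_succ, Pi.single_apply]⟩

theorem isAbsolute_single_six : IsAbsolute σ (Pi.single 6 1) :=
  ⟨-Pi.single 5 1, by simp [cross, funext_iff, Fin.forall_fin_succ],
    by simp [twistedCross, funext_iff, Fin.forall_fin_succ, Pi.single_apply]⟩

theorem IsAbsolute.vecMul (hx : IsAbsolute σ x) {g : GL (Fin 7) F}
    (hg : g ∈ productStabilizer σ) : IsAbsolute σ (x ᵥ* g.1) := by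
  obtain ⟨y, hxy, htwist⟩ := hx
  refine ⟨y ᵥ* g.1, by rw [hg.cross_vecMul, hxy, zero_vecMul], ?_⟩
  rw [hg.twistedCross_vecMul hxy, htwist]
  exact (funext (RingHom.map_vecMul σ g.1 x)).symm

theorem twistedCross_eq_comp_iff {y : Fin 7 → F} : twistedCross x y = σ ∘ x ↔
    x 0 * y 1 - x 1 * y 0 = σ (x 0) ∧
    x 0 * y 2 - x 2 * y 0 = σ (x 1) ∧
    -(x 1 * y 4 - x 4 * y 1) = σ (x 2) ∧
    (x 0 * y 6 - x 6 * y 0) + (x 1 * y 5 - x 5 * y 1) = σ (x 3) ∧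
    -(x 2 * y 5 - x 5 * y 2) = σ (x 4) ∧
    x 4 * y 6 - x 6 * y 4 = σ (x 5) ∧
    x 5 * y 6 - x 6 * y 5 = σ (x 6) := by
  simp [twistedCross, funext_iff, Fin.forall_fin_succ]

theorem IsAbsolute.eq_single_six (hx : IsAbsolute σ x) (hx0 : x 0 = 0) :
    x = Pi.single 6 (x 6) := by
  obtain ⟨y, hxy, htwist⟩ := hx
  obtain ⟨c0, c1, -, c3, -, c5, c6⟩ := cross_eq_zero_iff.1 hxy
  obtain ⟨t0, t1, t2, t3, t4, t5, -⟩ := twistedCross_eq_comp_iff.1 htwist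
  have hσ {a : F} : σ a = 0 → a = 0 := (map_eq_zero σ).1
  -- If `x i ≠ 0`, the equations force `y 0 = 0`, `y 1 = 0`, … one after the other, and then
  -- `σ (x i) = 0`.
  have hx1 : x 1 = 0 := by grind [map_zero σ]
  have hx2 : x 2 = 0 := by grind [map_zero σ]
  have hx3 : x 3 = 0 := by grind [map_zero σ]
  have hx4 : x 4 = 0 := by grind [map_zero σ]
  have hx5 : x 5 = 0 := by grind [map_zero σ]
  simp [funext_iff, Fin.forall_fin_succ, hx0, hx1, hx2, hx3, hx4, hx5]

theorem IsAbsolute.eq_single_zero [CharP F 3] (hx : IsAbsolute σ x) (hx0 : x 0 ≠ 0)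
    (hx1 : x 1 = 0) (hx2 : x 2 = 0) (hx3 : x 3 = 0) : x = Pi.single 0 (x 0) := by
  obtain ⟨y, hxy, htwist⟩ := hx
  obtain ⟨c0, -, -, c3, c4, -, -⟩ := cross_eq_zero_iff.1 hxy
  obtain ⟨t0, t1, t2, t3, -, -, -⟩ := twistedCross_eq_comp_iff.1 htwist
  have hσx0 : σ (x 0) ≠ 0 := by simpa using hx0
  have hy1 : y 1 ≠ 0 := by grind
  have hx4 : x 4 = 0 := by grind [map_zero σ]
  have hx6 : x 6 = 0 := by grind
  have hx5 : x 5 = 0 := by grind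
  simp [funext_iff, Fin.forall_fin_succ, hx1, hx2, hx3, hx4, hx5, hx6]

end AbsolutePoints

section Torus

theorem cross_single_zero_left (k : F) (x : Fin 7 → F) : cross (Pi.single 0 k) x =
    ![-(k * x 3), k * x 4, -(k * x 5), -(k * x 6), 0, 0, 0] := by
  simp [cross]

theorem cross_single_six_right (n : F) (x : Fin 7 → F) : cross x (Pi.single 6 n) =
    ![0, 0, 0, -(x 0 * n), -(x 1 * n), x 2 * n, -(x 3 * n)] := by
  simp [cross]

theorem cross_single_three_right (x : Fin 7 → F) : cross x (Pi.single 3 1) =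
    ![-x 0, x 1, x 2, 0, -x 4, -x 5, x 6] := by
  simp [cross]

theorem twistedCross_single_zero_left (k : F) (x : Fin 7 → F) :
    twistedCross (Pi.single 0 k) x = ![k * x 1, k * x 2, 0, k * x 6, 0, 0, 0] := by
  simp [twistedCross]

theorem twistedCross_single_six_right (n : F) (x : Fin 7 → F) :
    twistedCross x (Pi.single 6 n) = ![0, 0, 0, x 0 * n, 0, x 4 * n, x 5 * n] := by
  simp [twistedCross]

variable {σ : F →+* F} {M : Matrix (Fin 7) (Fin 7) F} {k n : F} {x y : Fin 7 → F}

theorem PreservesProducts.single_three_vecMul (hM : PreservesProducts σ M) (hk : k ≠ 0)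
    (h0 : Pi.single 0 1 ᵥ* M = Pi.single 0 k) (h6 : Pi.single 6 1 ᵥ* M = Pi.single 6 n) :
    k * n = 1 ∧ Pi.single 3 1 ᵥ* M = Pi.single 3 1 := by
  have hcross06 : cross (Pi.single 0 1) (Pi.single 6 1) = -Pi.single 3 (1 : F) := by
    simp [cross, funext_iff, Fin.forall_fin_succ]
  have hcross03 : cross (Pi.single 0 1) (Pi.single 3 1) = -Pi.single 0 (1 : F) := by
    simp [cross, funext_iff, Fin.forall_fin_succ]
  have h3 : Pi.single 3 1 ᵥ* M = Pi.single 3 (k * n) := by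
    have h := hM.cross_vecMul (Pi.single 0 1) (Pi.single 6 1)
    rw [hcross06, h0, h6, cross_single_six_right, neg_vecMul] at h
    rw [← neg_neg (Pi.single 3 1 ᵥ* M), ← h]
    simp [funext_iff, Fin.forall_fin_succ]
  have hkn : k * n = 1 := by
    have h := congrFun (hM.cross_vecMul (Pi.single 0 1) (Pi.single 3 1)) 0
    rw [hcross03, h0, h3, cross_single_zero_left, neg_vecMul, h0] at h
    simpa [hk] using h
  exact ⟨hkn, hkn ▸ h3⟩

theorem PreservesProducts.vecMul_eq_of_cross_single_zero [CharP F 3] (hM : PreservesProducts σ M)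
    (hk : k ≠ 0) (h0 : Pi.single 0 1 ᵥ* M = Pi.single 0 k)
    (h3 : Pi.single 3 1 ᵥ* M = Pi.single 3 1) (hxy : twistedCross (Pi.single 0 1) x = y)
    (hzero : cross (Pi.single 0 1) x = 0) (hthree : cross x (Pi.single 3 1) = x) :
    x ᵥ* M = ![0, (y ᵥ* M.map σ) 0 / k, (y ᵥ* M.map σ) 1 / k, 0, 0, 0, 0] := by
  have hzero' := hM.cross_vecMul (Pi.single 0 1) x
  rw [hzero, h0, zero_vecMul, cross_single_zero_left] at hzero'
  have hthree' := hM.cross_vecMul x (Pi.single 3 1)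
  rw [hthree, h3, cross_single_three_right] at hthree'
  have htwist := hM.twistedCross_vecMul hzero
  rw [hxy, h0, twistedCross_single_zero_left] at htwist
  simp only [funext_iff, Fin.forall_fin_succ, Fin.succ_zero_eq_one, Fin.succ_one_eq_two,
    Fin.reduceSucc, cons_val_zero, cons_val_succ, Pi.zero_apply, IsEmpty.forall_iff]
    at hzero' hthree' htwist ⊢
  grind

theorem PreservesProducts.vecMul_eq_of_cross_single_six [CharP F 3] (hM : PreservesProducts σ M)
    (hn : n ≠ 0) (h6 : Pi.single 6 1 ᵥ* M = Pi.single 6 n)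
    (h3 : Pi.single 3 1 ᵥ* M = Pi.single 3 1) (hxy : twistedCross x (Pi.single 6 1) = y)
    (hsix : cross x (Pi.single 6 1) = 0) (hthree : cross x (Pi.single 3 1) = -x) :
    x ᵥ* M = ![0, 0, 0, 0, (y ᵥ* M.map σ) 5 / n, (y ᵥ* M.map σ) 6 / n, 0] := by
  have hsix' := hM.cross_vecMul x (Pi.single 6 1)
  rw [hsix, h6, zero_vecMul, cross_single_six_right] at hsix'
  have hthree' := hM.cross_vecMul x (Pi.single 3 1)
  rw [hthree, h3, neg_vecMul, cross_single_three_right] at hthree'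
  have htwist := hM.twistedCross_vecMul hsix
  rw [hxy, h6, twistedCross_single_six_right] at htwist
  simp only [funext_iff, Fin.forall_fin_succ, Fin.succ_zero_eq_one, Fin.succ_one_eq_two,
    Fin.reduceSucc, cons_val_zero, cons_val_succ, Pi.zero_apply, Pi.neg_apply,
    IsEmpty.forall_iff] at hsix' hthree' htwist ⊢
  grind

theorem single_vecMul_map (i : Fin 7) : Pi.single i 1 ᵥ* M.map σ = σ ∘ (Pi.single i 1 ᵥ* M) := by
  ext
  simp

theorem PreservesProducts.eq_torusMatrix [CharP F 3] (hσ : IsTits σ)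
    (hM : PreservesProducts σ M) (hk : k ≠ 0) (h0 : Pi.single 0 1 ᵥ* M = Pi.single 0 k)
    (h6 : Pi.single 6 1 ᵥ* M = Pi.single 6 n) : M = torusMatrix σ k := by
  obtain ⟨hkn, h3⟩ := hM.single_three_vecMul hk h0 h6
  obtain rfl : n = k⁻¹ := eq_inv_of_mul_eq_one_right hkn
  have hσk : σ k ≠ 0 := (map_ne_zero σ).2 hk
  have h1 : Pi.single 1 1 ᵥ* M = Pi.single 1 (σ k * k⁻¹) := by
    rw [hM.vecMul_eq_of_cross_single_zero hk h0 h3 (y := Pi.single 0 1), single_vecMul_map, h0]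
    all_goals simp [cross, twistedCross, funext_iff, Fin.forall_fin_succ, div_eq_mul_inv]
  have h2 : Pi.single 2 1 ᵥ* M = Pi.single 2 (k ^ 2 * (σ k)⁻¹) := by
    rw [hM.vecMul_eq_of_cross_single_zero hk h0 h3 (y := Pi.single 1 1), single_vecMul_map, h1]
    all_goals simp [cross, twistedCross, funext_iff, Fin.forall_fin_succ, hσ k]
    field
  have h5 : Pi.single 5 1 ᵥ* M = Pi.single 5 (k * (σ k)⁻¹) := by
    rw [hM.vecMul_eq_of_cross_single_six (inv_ne_zero hk) h6 h3 (y := Pi.single 6 1),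
      single_vecMul_map, h6]
    all_goals simp [cross, twistedCross, funext_iff, Fin.forall_fin_succ, mul_comm]
  have h4 : Pi.single 4 1 ᵥ* M = Pi.single 4 (σ k * k⁻¹ ^ 2) := by
    rw [hM.vecMul_eq_of_cross_single_six (inv_ne_zero hk) h6 h3 (y := Pi.single 5 1),
      single_vecMul_map, h5]
    all_goals simp [cross, twistedCross, funext_iff, Fin.forall_fin_succ, hσ k]
    field
  refine Matrix.ext_of_single_vecMul fun i => ?_
  rw [torusMatrix, single_vecMul_diagonal, one_mul]
  fin_cases i
  exacts [h0, h1, h2, h3, h4, h5, h6]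

end Torus

section Bruhat

theorem eq_of_vecMul_eq {g : GL (Fin 7) F} {x y : Fin 7 → F} (h : x ᵥ* g.1 = y ᵥ* g.1) : x = y :=
  vecMul_injective_of_isUnit g.isUnit h

theorem eq_of_forall_vecMul_eq {g h : GL (Fin 7) F} (hgh : ∀ x, x ᵥ* g.1 = x ᵥ* h.1) : g = h :=
  Units.ext (Matrix.ext_of_single_vecMul fun _ => hgh _)

variable (σ : F →+* F)

/-- The element `S(σ a, σ b, σ c)` of the paper. -/
def unipotent (a b c : F) : GL (Fin 7) F :=
  alpha σ a * beta σ b * gamma σ c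

theorem vecMul_unipotent (a b c : F) (x : Fin 7 → F) : x ᵥ* (unipotent σ a b c).1 =
    x ᵥ* alphaMatrix σ a ᵥ* betaMatrix σ b ᵥ* gammaMatrix σ c := by
  simp [unipotent, alpha, beta, gamma]

theorem single_six_vecMul_unipotent (a b c n : F) :
    Pi.single 6 n ᵥ* (unipotent σ a b c).1 = Pi.single 6 n := by
  rw [vecMul_unipotent, vecMul_alphaMatrix, vecMul_betaMatrix, vecMul_gammaMatrix]
  simp [funext_iff, Fin.forall_fin_succ]

theorem unipotent_pow_nine [CharP F 3] (a b c : F) : unipotent σ a b c ^ 9 = 1 :=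
  Units.ext <| (((isUnitriangular_alphaMatrix σ a).mul (isUnitriangular_betaMatrix σ b)).mul
    (isUnitriangular_gammaMatrix σ c)).pow_eq_one 3 (k := 2) (by simp)

variable {σ}

theorem unipotent_mem_group (a b c : F) : unipotent σ a b c ∈ group σ :=
  mul_mem (mul_mem (alpha_mem_group a) (beta_mem_group b)) (gamma_mem_group c)

variable [CharP F 3] {x : Fin 7 → F}

theorem IsAbsolute.exists_vecMul_unipotent (hσ : IsTits σ) (hx : IsAbsolute σ x) (hx0 : x 0 ≠ 0) :
    ∃ a b c, x ᵥ* (unipotent σ a b c).1 = Pi.single 0 (x 0) := by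
  obtain ⟨y, hy⟩ : ∃ y, y = x ᵥ* alphaMatrix σ (-x 1 / x 0) := ⟨_, rfl⟩
  obtain ⟨z, hz⟩ : ∃ z, z = y ᵥ* betaMatrix σ (y 2 / x 0) := ⟨_, rfl⟩
  obtain ⟨w, hw⟩ : ∃ w, w = z ᵥ* gammaMatrix σ (z 3 / x 0) := ⟨_, rfl⟩
  have hxw : x ᵥ* (unipotent σ (-x 1 / x 0) (y 2 / x 0) (z 3 / x 0)).1 = w := by
    rw [vecMul_unipotent, ← hy, ← hz, ← hw]
  have habs : IsAbsolute σ w :=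
    hxw ▸ hx.vecMul (group_le_productStabilizer hσ (unipotent_mem_group _ _ _))
  have hy0 : y 0 = x 0 := by simp [hy, vecMul_alphaMatrix]
  have hy1 : y 1 = 0 := by
    rw [hy, vecMul_alphaMatrix]
    simp [mul_div_cancel₀ _ hx0]
  have hz0 : z 0 = x 0 := by simp [hz, hy0, vecMul_betaMatrix]
  have hz1 : z 1 = 0 := by simp [hz, hy1, vecMul_betaMatrix]
  have hz2 : z 2 = 0 := by simp [hz, hy0, vecMul_betaMatrix, mul_div_cancel₀ _ hx0]
  have hw0 : w 0 = x 0 := by simp [hw, hz0, vecMul_gammaMatrix]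
  refine ⟨_, _, _, hxw.trans ?_⟩
  rw [habs.eq_single_zero, hw0]
  · rwa [hw0]
  · simp [hw, hz1, vecMul_gammaMatrix]
  · simp [hw, hz2, vecMul_gammaMatrix]
  · simp [hw, hz0, vecMul_gammaMatrix, mul_div_cancel₀ _ hx0]

theorem IsAbsolute.exists_vecMul_beta (hσ : IsTits σ) (hx : IsAbsolute σ x) (hx0 : x 0 ≠ 0)
    (hx1 : x 1 = 0) (hx3 : x 3 = 0) : ∃ b, x ᵥ* (beta σ b).1 = Pi.single 0 (x 0) := by
  obtain ⟨y, hy⟩ : ∃ y, y = x ᵥ* betaMatrix σ (x 2 / x 0) := ⟨_, rfl⟩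
  have habs : IsAbsolute σ y :=
    hy ▸ hx.vecMul (group_le_productStabilizer hσ (beta_mem_group (x 2 / x 0)))
  have hy0 : y 0 = x 0 := by simp [hy, vecMul_betaMatrix]
  refine ⟨_, hy.symm.trans ?_⟩
  rw [habs.eq_single_zero, hy0]
  · rwa [hy0]
  · simp [hy, hx1, vecMul_betaMatrix]
  · simp [hy, vecMul_betaMatrix, mul_div_cancel₀ _ hx0]
  · simp [hy, hx1, hx3, vecMul_betaMatrix]

theorem exists_eq_torus (hσ : IsTits σ) {g : GL (Fin 7) F} (hg : g ∈ group σ) {k n : F}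
    (h0 : Pi.single 0 1 ᵥ* g.1 = Pi.single 0 k) (h6 : Pi.single 6 1 ᵥ* g.1 = Pi.single 6 n) :
    ∃ κ, g = torus σ κ := by
  have hk : k ≠ 0 := by
    rintro rfl
    have h := eq_of_vecMul_eq (h0.trans (by simp : _ = 0 ᵥ* g.1))
    simpa using congrFun h 0
  exact ⟨Units.mk0 k hk,
    Units.ext ((group_le_productStabilizer hσ hg).eq_torusMatrix hσ hk h0 h6)⟩

theorem single_zero_vecMul_apply_zero_ne_zero (hσ : IsTits σ) {g : GL (Fin 7) F}
    (hg : g ∈ group σ) {n : F} (h6 : Pi.single 6 1 ᵥ* g.1 = Pi.single 6 n) :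
    (Pi.single 0 1 ᵥ* g.1) 0 ≠ 0 := by
  intro h
  obtain ⟨y, h0⟩ : ∃ y, Pi.single 0 1 ᵥ* g.1 = Pi.single 6 y :=
    ⟨_, (isAbsolute_single_zero.vecMul (group_le_productStabilizer hσ hg)).eq_single_six h⟩
  have hn : (n • Pi.single 0 1 : Fin 7 → F) = y • Pi.single 6 1 := by
    apply eq_of_vecMul_eq (g := g)
    rw [smul_vecMul, smul_vecMul, h0, h6, ← Pi.single_smul, ← Pi.single_smul, smul_eq_mul,
      smul_eq_mul, mul_comm]
  obtain rfl : n = 0 := by simpa using congrFun hn 0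
  have h6' := eq_of_vecMul_eq (h6.trans (by simp : _ = 0 ᵥ* g.1))
  simpa using congrFun h6' 6

theorem exists_eq_torus_mul_unipotent_inv (hσ : IsTits σ) {g : GL (Fin 7) F} (hg : g ∈ group σ)
    {n : F} (h6 : Pi.single 6 1 ᵥ* g.1 = Pi.single 6 n) :
    ∃ κ a b c, g = torus σ κ * (unipotent σ a b c)⁻¹ := by
  obtain ⟨a, b, c, habc⟩ :=
    (isAbsolute_single_zero.vecMul (group_le_productStabilizer hσ hg)).exists_vecMul_unipotent hσ
      (single_zero_vecMul_apply_zero_ne_zero hσ hg h6)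
  obtain ⟨κ, hκ⟩ := exists_eq_torus hσ (mul_mem hg (unipotent_mem_group a b c)) (n := n)
    (by rw [Units.val_mul, ← vecMul_vecMul, habc])
    (by rw [Units.val_mul, ← vecMul_vecMul, h6, single_six_vecMul_unipotent])
  exact ⟨κ, a, b, c, eq_mul_inv_of_mul_eq hκ⟩

end Bruhat

section Involutions

variable {σ : F →+* F}

theorem vecMul_torus_neg_one (x : Fin 7 → F) :
    x ᵥ* (torus σ (-1)).1 = ![-x 0, x 1, -x 2, x 3, -x 4, x 5, -x 6] := by
  rw [val_torus, vecMul_torusMatrix]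
  simp

theorem weyl_mul_weyl : weyl F * weyl F = 1 := Units.ext ups_mul_ups

theorem weyl_mul_torus (κ : Fˣ) : weyl F * torus σ κ = torus σ κ⁻¹ * weyl F := by
  refine eq_of_forall_vecMul_eq fun x => ?_
  simp only [Units.val_mul, ← vecMul_vecMul, val_weyl, vecMul_ups, val_torus, vecMul_torusMatrix]
  simp [mul_comm]

theorem isConjUnder_torus_mul_weyl (κ ν : Fˣ) :
    IsConjUnder (group σ) (torus σ (κ * ν ^ 2) * weyl F) (torus σ κ * weyl F) := by
  refine ⟨torus σ ν⁻¹, torus_mem_group _, ?_⟩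
  rw [SemiconjBy, mul_assoc (torus σ κ), weyl_mul_torus, ← mul_assoc, ← mul_assoc, ← map_mul,
    ← map_mul]
  congr 2
  rw [inv_inv, mul_left_comm, sq, inv_mul_cancel_left]

variable [CharP F 3] (σ)

theorem isConjUnder_weyl : IsConjUnder (group σ) (weyl F) (torus σ (-1)) := by
  refine ⟨alpha σ 1 * weyl F * beta σ 1 * weyl F * gamma σ 1, ?_, ?_⟩
  · exact mul_mem (mul_mem (mul_mem (mul_mem (alpha_mem_group 1) weyl_mem_group) (beta_mem_group 1))
      weyl_mem_group) (gamma_mem_group 1)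
  · refine eq_of_forall_vecMul_eq fun x => ?_
    simp only [Units.val_mul, ← vecMul_vecMul, vecMul_torus_neg_one, val_alpha, val_beta,
      val_gamma, val_weyl, vecMul_alphaMatrix, vecMul_betaMatrix, vecMul_gammaMatrix, vecMul_ups,
      map_one]
    ext i
    fin_cases i <;> dsimp <;> grind

theorem isConjUnder_torus_neg_one_mul_weyl :
    IsConjUnder (group σ) (torus σ (-1) * weyl F) (torus σ (-1)) := by
  refine ⟨gamma σ 1 * weyl F * beta σ 1 * weyl F * alpha σ 1, ?_, ?_⟩
  · exact mul_mem (mul_mem (mul_mem (mul_mem (gamma_mem_group 1) weyl_mem_group) (beta_mem_group 1))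
      weyl_mem_group) (alpha_mem_group 1)
  · refine eq_of_forall_vecMul_eq fun x => ?_
    simp only [Units.val_mul, ← vecMul_vecMul, vecMul_torus_neg_one, val_alpha, val_beta,
      val_gamma, val_weyl, vecMul_alphaMatrix, vecMul_betaMatrix, vecMul_gammaMatrix, vecMul_ups,
      map_one]
    ext i
    fin_cases i <;> dsimp <;> grind

end Involutions

section Conjugacy

theorem exists_units_eq_sq_or_eq_neg_sq (hsq : ∀ a : F, IsSquare a ∨ IsSquare (-a)) (κ : Fˣ) :
    ∃ ν : Fˣ, κ = ν ^ 2 ∨ κ = -1 * ν ^ 2 := by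
  obtain ⟨r, hr⟩ | ⟨r, hr⟩ := hsq κ
  all_goals
    have hr0 : r ≠ 0 := by
      rintro rfl
      simp at hr
    refine ⟨Units.mk0 r hr0, ?_⟩
  · left
    ext
    simp [hr, sq]
  · right
    ext
    simp [← neg_eq_iff_eq_neg, hr, sq]

variable {σ : F →+* F} {j : GL (Fin 7) F}

theorem single_six_vecMul_torus_mul_unipotent_inv (κ : Fˣ) (a b c n : F) :
    Pi.single 6 n ᵥ* (torus σ κ * (unipotent σ a b c)⁻¹).1 = Pi.single 6 (n * ↑κ⁻¹) := by
  apply eq_of_vecMul_eq (g := unipotent σ a b c)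
  rw [vecMul_vecMul, ← Units.val_mul, inv_mul_cancel_right, single_six_vecMul_unipotent, val_torus,
    vecMul_torusMatrix]
  simp [funext_iff, Fin.forall_fin_succ]

theorem single_vecMul_ups_zero (n : F) : Pi.single 0 n ᵥ* ups = Pi.single 6 (-n) := by
  rw [vecMul_ups]
  simp [funext_iff, Fin.forall_fin_succ]

theorem single_vecMul_ups_six (n : F) : Pi.single 6 n ᵥ* ups = Pi.single 0 (-n) := by
  rw [vecMul_ups]
  simp [funext_iff, Fin.forall_fin_succ]

variable [CharP F 3]

theorem isConjUnder_of_single_six_vecMul (hσ : IsTits σ) (hj : j ∈ group σ) (hjj : j * j = 1)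
    (hne : j ≠ 1) {n : F} (h6 : Pi.single 6 1 ᵥ* j.1 = Pi.single 6 n) :
    IsConjUnder (group σ) j (torus σ (-1)) := by
  obtain ⟨κ, a, b, c, rfl⟩ := exists_eq_torus_mul_unipotent_inv hσ hj h6
  have hv : (unipotent σ a b c)⁻¹ ^ 9 = 1 := by rw [inv_pow, unipotent_pow_nine, inv_one]
  have hκ : κ * κ = 1 := by
    have h : Pi.single 6 (1 * ↑κ⁻¹ * ↑κ⁻¹ : F) = (Pi.single 6 1 : Fin 7 → F) := by
      rw [← single_six_vecMul_torus_mul_unipotent_inv κ a b c,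
        ← single_six_vecMul_torus_mul_unipotent_inv κ a b c, vecMul_vecMul, ← Units.val_mul, hjj,
        Units.val_one, vecMul_one]
    have h' := Pi.single_injective _ h
    rw [one_mul] at h'
    rw [← _root_.inv_inj, mul_inv, inv_one]
    exact Units.ext h'
  obtain rfl | rfl := (Units.inv_eq_self_iff κ).1 (inv_eq_of_mul_eq_one_left hκ)
  · refine absurd ?_ hne
    rw [map_one, one_mul] at hjj ⊢
    generalize (unipotent σ a b c)⁻¹ = v at hv hjj
    calc
      v = v ^ 9 * (v * v)⁻¹ ^ 4 := by group
      _ = 1 := by rw [hv, hjj, inv_one, one_pow, one_mul]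
  · exact isConjUnder_of_involutions (n := 4) (inv_mem (unipotent_mem_group a b c))
      (by rw [← map_mul, neg_one_mul, neg_neg, map_one]) hjj hv

theorem exists_eq_torus_mul_weyl (hσ : IsTits σ) (hj : j ∈ group σ) (hjj : j * j = 1) {k : F}
    (hk : k ≠ 0) (h6 : Pi.single 6 1 ᵥ* j.1 = Pi.single 0 k) : ∃ κ, j = torus σ κ * weyl F := by
  have h0 : Pi.single 0 1 ᵥ* j.1 = Pi.single 6 k⁻¹ := by
    apply eq_of_vecMul_eq (g := j)
    rw [vecMul_vecMul, ← Units.val_mul, hjj, Units.val_one, vecMul_one, ← mul_one k⁻¹,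
      ← smul_eq_mul, Pi.single_smul, smul_vecMul, h6, ← Pi.single_smul, smul_eq_mul,
      inv_mul_cancel₀ hk]
  obtain ⟨κ, hκ⟩ := exists_eq_torus hσ (mul_mem hj weyl_mem_group) (k := -k⁻¹) (n := -k)
    (by rw [Units.val_mul, ← vecMul_vecMul, h0, val_weyl, single_vecMul_ups_six])
    (by rw [Units.val_mul, ← vecMul_vecMul, h6, val_weyl, single_vecMul_ups_zero])
  exact ⟨κ, by rw [← hκ, mul_assoc, weyl_mul_weyl, mul_one]⟩

theorem isConjUnder_of_single_six_vecMul_ne_zero (hσ : IsTits σ)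
    (hsq : ∀ a : F, IsSquare a ∨ IsSquare (-a)) (hj : j ∈ group σ) (hjj : j * j = 1)
    (h6 : (Pi.single 6 1 ᵥ* j.1) 0 ≠ 0) : IsConjUnder (group σ) j (torus σ (-1)) := by
  have habs := isAbsolute_single_six.vecMul (group_le_productStabilizer hσ hj)
  obtain ⟨a, b, c, habc⟩ := habs.exists_vecMul_unipotent hσ h6
  have hu := unipotent_mem_group (σ := σ) a b c
  have hrow := single_six_vecMul_unipotent σ a b c 1
  generalize unipotent σ a b c = u at habc hu hrow
  have hrow_inv : Pi.single 6 1 ᵥ* u⁻¹.1 = Pi.single 6 1 := by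
    apply eq_of_vecMul_eq (g := u)
    rw [hrow, vecMul_vecMul, ← Units.val_mul, inv_mul_cancel, Units.val_one, vecMul_one]
  obtain ⟨κ, hκ⟩ := exists_eq_torus_mul_weyl hσ (j := u⁻¹ * j * u)
    (mul_mem (mul_mem (inv_mem hu) hj) hu)
    (by simp [mul_assoc, ← mul_assoc j j u, hjj]) h6
    (by rw [Units.val_mul, Units.val_mul, ← vecMul_vecMul, ← vecMul_vecMul, hrow_inv, habc])
  have hconj := isConjUnder_inv_mul_mul hu j
  rw [hκ] at hconj
  refine hconj.trans ?_
  obtain ⟨ν, rfl | rfl⟩ := exists_units_eq_sq_or_eq_neg_sq hsq κ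
  · have h := isConjUnder_torus_mul_weyl (σ := σ) 1 ν
    rw [map_one, one_mul, one_mul] at h
    exact h.trans (isConjUnder_weyl σ)
  · exact (isConjUnder_torus_mul_weyl (-1) ν).trans (isConjUnder_torus_neg_one_mul_weyl σ)

theorem isConjUnder_torus_neg_one (hσ : IsTits σ) (hsq : ∀ a : F, IsSquare a ∨ IsSquare (-a))
    (hj : j ∈ group σ) (hj2 : orderOf j = 2) : IsConjUnder (group σ) j (torus σ (-1)) := by
  obtain ⟨hjj, hne⟩ := orderOf_eq_prime_iff.1 hj2
  rw [sq] at hjj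
  by_cases h6 : (Pi.single 6 1 ᵥ* j.1) 0 = 0
  · have habs := isAbsolute_single_six.vecMul (group_le_productStabilizer hσ hj)
    exact isConjUnder_of_single_six_vecMul hσ hj hjj hne (habs.eq_single_six h6)
  · exact isConjUnder_of_single_six_vecMul_ne_zero hσ hsq hj hjj h6

end Conjugacy

section SpecialLinear

open MatrixGroups

/-- For `M` the twist of `N` by `σ`, the action of `N` on the seven-dimensional module restricted to
`SL(2, F)`: the sum of the symmetric square of the natural module (coordinates `1, 3, 5`) and of the
tensor product of the twisted natural module with the natural one (coordinates `0, 2, 4, 6`). -/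
def slTwoMatrix (M N : Matrix (Fin 2) (Fin 2) F) : Matrix (Fin 7) (Fin 7) F :=
  !![M 0 0 * N 0 0, 0, -(M 0 0 * N 0 1), 0, -(M 0 1 * N 0 0), 0, -(M 0 1 * N 0 1);
     0, N 0 0 ^ 2, 0, N 0 0 * N 0 1, 0, -N 0 1 ^ 2, 0;
     -(M 0 0 * N 1 0), 0, M 0 0 * N 1 1, 0, M 0 1 * N 1 0, 0, M 0 1 * N 1 1;
     0, -(N 0 0 * N 1 0), 0, N 0 0 * N 1 1 + N 0 1 * N 1 0, 0, N 0 1 * N 1 1, 0;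
     -(M 1 0 * N 0 0), 0, M 1 0 * N 0 1, 0, M 1 1 * N 0 0, 0, M 1 1 * N 0 1;
     0, -N 1 0 ^ 2, 0, -(N 1 0 * N 1 1), 0, N 1 1 ^ 2, 0;
     -(M 1 0 * N 1 0), 0, M 1 0 * N 1 1, 0, M 1 1 * N 1 0, 0, M 1 1 * N 1 1]

theorem vecMul_slTwoMatrix (M N : Matrix (Fin 2) (Fin 2) F) (x : Fin 7 → F) :
    x ᵥ* slTwoMatrix M N =
    ![x 0 * (M 0 0 * N 0 0) - x 2 * (M 0 0 * N 1 0) - x 4 * (M 1 0 * N 0 0)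
        - x 6 * (M 1 0 * N 1 0),
      x 1 * N 0 0 ^ 2 - x 3 * (N 0 0 * N 1 0) - x 5 * N 1 0 ^ 2,
      -(x 0 * (M 0 0 * N 0 1)) + x 2 * (M 0 0 * N 1 1) + x 4 * (M 1 0 * N 0 1)
        + x 6 * (M 1 0 * N 1 1),
      x 1 * (N 0 0 * N 0 1) + x 3 * (N 0 0 * N 1 1 + N 0 1 * N 1 0) - x 5 * (N 1 0 * N 1 1),
      -(x 0 * (M 0 1 * N 0 0)) + x 2 * (M 0 1 * N 1 0) + x 4 * (M 1 1 * N 0 0)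
        + x 6 * (M 1 1 * N 1 0),
      -(x 1 * N 0 1 ^ 2) + x 3 * (N 0 1 * N 1 1) + x 5 * N 1 1 ^ 2,
      -(x 0 * (M 0 1 * N 0 1)) + x 2 * (M 0 1 * N 1 1) + x 4 * (M 1 1 * N 0 1)
        + x 6 * (M 1 1 * N 1 1)] := by
  ext i
  fin_cases i <;> simp [slTwoMatrix, vecMul, dotProduct, Fin.sum_univ_succ] <;> ring

theorem slTwoMatrix_one : slTwoMatrix (1 : Matrix (Fin 2) (Fin 2) F) 1 = 1 := by
  simp [slTwoMatrix, ← Matrix.ext_iff, Fin.forall_fin_succ]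

variable [CharP F 3]

theorem slTwoMatrix_mul (M N M' N' : Matrix (Fin 2) (Fin 2) F) :
    slTwoMatrix (M * M') (N * N') = slTwoMatrix M N * slTwoMatrix M' N' := by
  refine Matrix.ext_of_single_vecMul fun j => ?_
  generalize (Pi.single j 1 : Fin 7 → F) = x
  simp only [← vecMul_vecMul, vecMul_slTwoMatrix, mul_apply, Fin.sum_univ_two]
  ext i
  fin_cases i <;> dsimp <;> grind

variable (σ : F →+* F)

/-- The homomorphism from `SL(2, F)` to the Ree group; its kernel is the center. -/
def slTwo : SL(2, F) →* GL (Fin 7) F :=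
  MonoidHom.toHomUnits
    { toFun M := slTwoMatrix (M.1.map σ) M.1
      map_one' := by simp [slTwoMatrix_one, Matrix.map_one]
      map_mul' M M' := by simp [← slTwoMatrix_mul, Matrix.map_mul] }

@[simp]
theorem val_slTwo (M : SL(2, F)) : (slTwo σ M).1 = slTwoMatrix (M.1.map σ) M.1 := rfl

theorem slTwo_transvection_zero_one (u : F) :
    slTwo σ (SpecialLinearGroup.transvection zero_ne_one u) = beta σ u := by
  refine eq_of_forall_vecMul_eq fun x => ?_
  simp only [val_slTwo, vecMul_slTwoMatrix, val_beta, vecMul_betaMatrix,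
    SpecialLinearGroup.transvection_coe]
  ext i
  fin_cases i <;> simp [mul_comm]

theorem slTwo_transvection_one_zero (u : F) :
    slTwo σ (SpecialLinearGroup.transvection one_ne_zero u) = weyl F * beta σ (-u) * weyl F := by
  refine eq_of_forall_vecMul_eq fun x => ?_
  simp only [Units.val_mul, ← vecMul_vecMul, val_slTwo, vecMul_slTwoMatrix, val_beta,
    vecMul_betaMatrix, val_weyl, vecMul_ups, SpecialLinearGroup.transvection_coe]
  ext i
  fin_cases i <;> simp <;> ring

theorem beta_mem_range_slTwo (u : F) : beta σ u ∈ (slTwo σ).range :=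
  ⟨_, slTwo_transvection_zero_one σ u⟩

theorem weyl_mem_range_slTwo : weyl F ∈ (slTwo σ).range := by
  obtain ⟨M, hM⟩ : ∃ M : SL(2, F), M.1 = !![0, 1; -1, 0] := ⟨⟨_, by simp⟩, rfl⟩
  refine ⟨M, Units.ext ?_⟩
  rw [val_slTwo, hM]
  simp [slTwoMatrix, ups]

theorem commute_torus_neg_one_slTwo (M : SL(2, F)) : Commute (torus σ (-1)) (slTwo σ M) := by
  refine eq_of_forall_vecMul_eq fun x => ?_
  simp only [Units.val_mul, ← vecMul_vecMul, vecMul_torus_neg_one, val_slTwo, vecMul_slTwoMatrix]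
  ext i
  fin_cases i <;> dsimp <;> ring

theorem slTwo_mem_group (M : SL(2, F)) : slTwo σ M ∈ group σ := by
  refine SL2.transvection_induction (slTwo σ · ∈ group σ) (fun i j hij c => ?_)
    (fun A B hA hB => ?_) M
  · fin_cases i <;> fin_cases j
    · exact absurd rfl hij
    · exact slTwo_transvection_zero_one σ c ▸ beta_mem_group c
    · exact slTwo_transvection_one_zero σ c ▸
        mul_mem (mul_mem weyl_mem_group (beta_mem_group (-c))) weyl_mem_group
    · exact absurd rfl hij
  · rw [map_mul]
    exact mul_mem hA hB

variable {σ}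

theorem torus_sq_eq_slTwo (hσ : IsTits σ) (ν : Fˣ) :
    torus σ (ν ^ 2) = slTwo σ (SpecialLinearGroup.diag2 (σ ν / ν) (by simp)) := by
  refine eq_of_forall_vecMul_eq fun x => ?_
  have hσν : σ ν ≠ 0 := by simp
  simp only [val_torus, vecMul_torusMatrix, val_slTwo, vecMul_slTwoMatrix,
    SpecialLinearGroup.diag2_coe']
  ext i
  fin_cases i <;> simp [hσ _, -mul_eq_mul_left_iff] <;> field_simp

theorem slTwo_eq_one_of_mem_center {M : SL(2, F)} (hM : M ∈ Subgroup.center SL(2, F)) :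
    slTwo σ M = 1 := by
  obtain ⟨r, hr, hrM⟩ := Matrix.SpecialLinearGroup.mem_center_iff.1 hM
  refine eq_of_forall_vecMul_eq fun x => ?_
  rw [val_slTwo, ← hrM, vecMul_slTwoMatrix, Units.val_one, vecMul_one]
  obtain rfl | rfl : r = 1 ∨ r = -1 := by simpa using hr
  all_goals simp [funext_iff, Fin.forall_fin_succ]

theorem mem_center_of_single_vecMul_slTwo {M : SL(2, F)}
    (h1 : Pi.single 1 1 ᵥ* (slTwo σ M).1 = Pi.single 1 1)
    (h5 : Pi.single 5 1 ᵥ* (slTwo σ M).1 = Pi.single 5 1) : M ∈ Subgroup.center SL(2, F) := by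
  rw [val_slTwo, vecMul_slTwoMatrix] at h1 h5
  have h00 : M.1 0 0 ^ 2 = 1 := by simpa using congrFun h1 1
  have h01 : M.1 0 1 = 0 := by simpa using congrFun h1 5
  have h10 : M.1 1 0 = 0 := by simpa using congrFun h5 1
  have h11 : M.1 1 1 = M.1 0 0 := by
    have hdet := M.det_coe
    rw [det_fin_two, h01, zero_mul, sub_zero] at hdet
    grind
  refine Matrix.SpecialLinearGroup.mem_center_iff.2 ⟨M.1 0 0, by simpa using h00, ?_⟩
  ext i j
  fin_cases i <;> fin_cases j <;> simp [h01, h10, h11]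

theorem ker_slTwo : (slTwo σ).ker = Subgroup.center SL(2, F) := by
  refine le_antisymm (fun M hM => ?_) fun M hM => slTwo_eq_one_of_mem_center hM
  rw [MonoidHom.mem_ker] at hM
  apply mem_center_of_single_vecMul_slTwo (σ := σ) <;> rw [hM, Units.val_one, vecMul_one]

theorem torus_neg_one_ne_one : torus σ (-1) ≠ 1 := by
  intro h
  have h0 := congrFun (vecMul_torus_neg_one (σ := σ) (Pi.single 0 1)) 0
  rw [h, Units.val_one, vecMul_one] at h0
  dsimp at h0
  grind

theorem orderOf_torus_neg_one : orderOf (torus σ (-1)) = 2 :=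
  orderOf_eq_prime (by rw [← map_pow]; simp) torus_neg_one_ne_one

theorem torus_neg_one_notMem_range_slTwo : torus σ (-1) ∉ (slTwo σ).range := by
  rintro ⟨M, hM⟩
  have hcenter : M ∈ Subgroup.center SL(2, F) := by
    apply mem_center_of_single_vecMul_slTwo (σ := σ) <;>
      rw [hM, vecMul_torus_neg_one] <;> simp [funext_iff, Fin.forall_fin_succ]
  exact torus_neg_one_ne_one (hM.symm.trans (slTwo_eq_one_of_mem_center hcenter))

end SpecialLinear

section Centralizer

variable [CharP F 3] {σ : F →+* F} {g : GL (Fin 7) F}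

theorem vecMul_apply_eq_zero_of_commute (hg : Commute (torus σ (-1)) g) {x : Fin 7 → F}
    (hx : x ᵥ* (torus σ (-1)).1 = -x) : (x ᵥ* g.1) 1 = 0 ∧ (x ᵥ* g.1) 3 = 0 := by
  have h : x ᵥ* g.1 ᵥ* (torus σ (-1)).1 = -(x ᵥ* g.1) := by
    rw [vecMul_vecMul, ← Units.val_mul, ← hg.eq, Units.val_mul, ← vecMul_vecMul, hx, neg_vecMul]
  rw [vecMul_torus_neg_one] at h
  have h1 := congrFun h 1
  have h3 := congrFun h 3
  dsimp at h1 h3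
  grind

theorem torus_mem_zpowers_sup_range_slTwo (hσ : IsTits σ)
    (hsq : ∀ a : F, IsSquare a ∨ IsSquare (-a)) (κ : Fˣ) :
    torus σ κ ∈ Subgroup.zpowers (torus σ (-1)) ⊔ (slTwo σ).range := by
  obtain ⟨ν, rfl | rfl⟩ := exists_units_eq_sq_or_eq_neg_sq hsq κ
  · exact Subgroup.mem_sup_right ⟨_, (torus_sq_eq_slTwo hσ ν).symm⟩
  · rw [map_mul]
    exact Subgroup.mul_mem_sup (Subgroup.mem_zpowers _) ⟨_, (torus_sq_eq_slTwo hσ ν).symm⟩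

theorem mem_zpowers_sup_range_slTwo_of_single_six_vecMul (hσ : IsTits σ)
    (hsq : ∀ a : F, IsSquare a ∨ IsSquare (-a)) (hg : g ∈ group σ)
    (hcomm : Commute (torus σ (-1)) g) {n : F} (h6 : Pi.single 6 1 ᵥ* g.1 = Pi.single 6 n) :
    g ∈ Subgroup.zpowers (torus σ (-1)) ⊔ (slTwo σ).range := by
  obtain ⟨h1, h3⟩ := vecMul_apply_eq_zero_of_commute hcomm (x := Pi.single 0 1) (by
    rw [vecMul_torus_neg_one]
    simp [funext_iff, Fin.forall_fin_succ])
  obtain ⟨b, hb⟩ :=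
    (isAbsolute_single_zero.vecMul (group_le_productStabilizer hσ hg)).exists_vecMul_beta hσ
      (single_zero_vecMul_apply_zero_ne_zero hσ hg h6) h1 h3
  obtain ⟨κ, hκ⟩ := exists_eq_torus hσ (mul_mem hg (beta_mem_group b)) (n := n)
    (by rw [Units.val_mul, ← vecMul_vecMul, hb])
    (by
      rw [Units.val_mul, ← vecMul_vecMul, h6, val_beta, vecMul_betaMatrix]
      simp [funext_iff, Fin.forall_fin_succ])
  have hbeta : beta σ b ∈ Subgroup.zpowers (torus σ (-1)) ⊔ (slTwo σ).range :=
    Subgroup.mem_sup_right (beta_mem_range_slTwo σ b)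
  rw [← Subgroup.mul_mem_cancel_right _ hbeta, hκ]
  exact torus_mem_zpowers_sup_range_slTwo hσ hsq κ

theorem mem_zpowers_sup_range_slTwo (hσ : IsTits σ)
    (hsq : ∀ a : F, IsSquare a ∨ IsSquare (-a)) (hg : g ∈ group σ)
    (hcomm : Commute (torus σ (-1)) g) :
    g ∈ Subgroup.zpowers (torus σ (-1)) ⊔ (slTwo σ).range := by
  have habs := isAbsolute_single_six.vecMul (group_le_productStabilizer hσ hg)
  by_cases h0 : (Pi.single 6 1 ᵥ* g.1) 0 = 0
  · exact mem_zpowers_sup_range_slTwo_of_single_six_vecMul hσ hsq hg hcomm (habs.eq_single_six h0)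
  obtain ⟨h1, h3⟩ := vecMul_apply_eq_zero_of_commute hcomm (x := Pi.single 6 1) (by
    rw [vecMul_torus_neg_one]
    simp [funext_iff, Fin.forall_fin_succ])
  obtain ⟨b, hb⟩ := habs.exists_vecMul_beta hσ h0 h1 h3
  obtain ⟨M, hM⟩ := mul_mem (beta_mem_range_slTwo σ b) (weyl_mem_range_slTwo σ)
  rw [← Subgroup.mul_mem_cancel_right _ (Subgroup.mem_sup_right (MonoidHom.mem_range.2 ⟨M, rfl⟩))]
  refine mem_zpowers_sup_range_slTwo_of_single_six_vecMul hσ hsq (mul_mem hg (slTwo_mem_group σ M))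
    (hcomm.mul_right (commute_torus_neg_one_slTwo σ M)) (n := -(Pi.single 6 1 ᵥ* g.1) 0) ?_
  rw [hM, Units.val_mul, Units.val_mul, ← vecMul_vecMul, ← vecMul_vecMul, hb, val_weyl,
    single_vecMul_ups_zero]

theorem group_inf_centralizer_torus_neg_one (hσ : IsTits σ)
    (hsq : ∀ a : F, IsSquare a ∨ IsSquare (-a)) :
    group σ ⊓ Subgroup.centralizer {torus σ (-1)} =
      Subgroup.zpowers (torus σ (-1)) ⊔ (slTwo σ).range := by
  refine le_antisymm (fun g ⟨hg, hcomm⟩ => mem_zpowers_sup_range_slTwo hσ hsq hg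
    (Subgroup.mem_centralizer_singleton_iff.1 hcomm).symm) (sup_le ?_ ?_)
  · rw [Subgroup.zpowers_le]
    exact ⟨torus_mem_group (-1), Subgroup.mem_centralizer_singleton_iff.2 rfl⟩
  · rintro _ ⟨M, rfl⟩
    exact ⟨slTwo_mem_group σ M,
      Subgroup.mem_centralizer_singleton_iff.2 (commute_torus_neg_one_slTwo σ M).symm.eq⟩

end Centralizer

section Order

open MatrixGroups

theorem ker_generalLinearGroup_det {n R : Type*} [Fintype n] [DecidableEq n] [CommRing R] :
    (GeneralLinearGroup.det : GL n R →* Rˣ).ker =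
      (SpecialLinearGroup.toGL : SpecialLinearGroup n R →* GL n R).range := by
  ext g
  constructor
  · intro hg
    exact ⟨⟨g.1, congrArg Units.val hg⟩, Units.ext rfl⟩
  · rintro ⟨M, rfl⟩
    exact SpecialLinearGroup.coeToGL_det M

theorem card_specialLinearGroup_mul_card_units {n R : Type*} [Fintype n] [DecidableEq n]
    [Nonempty n] [CommRing R] :
    Nat.card (SpecialLinearGroup n R) * Nat.card Rˣ = Nat.card (GL n R) := by
  rw [← Subgroup.card_mul_index (GeneralLinearGroup.det : GL n R →* Rˣ).ker, Subgroup.index_ker,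
    MonoidHom.range_eq_top.2 GeneralLinearGroup.det_surjective, Subgroup.card_top,
    ker_generalLinearGroup_det,
    Nat.card_congr (MonoidHom.ofInjective SpecialLinearGroup.toGL_injective).toEquiv]

theorem card_specialLinearGroup_two [Finite F] :
    Nat.card SL(2, F) = Nat.card F * (Nat.card F ^ 2 - 1) := by
  have := Fintype.ofFinite F
  have hq : 1 < Nat.card F := Finite.one_lt_card
  have h := card_specialLinearGroup_mul_card_units (n := Fin 2) (R := F)
  rw [card_GL_field, Nat.card_units, Fin.prod_univ_two, ← Nat.card_eq_fintype_card] at h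
  refine Nat.eq_of_mul_eq_mul_right (Nat.sub_pos_of_lt hq) (h.trans ?_)
  simp only [Fin.val_zero, Fin.val_one, pow_zero, pow_one, sq, ← Nat.mul_sub_one]
  ring

theorem card_center_specialLinearGroup_two (hF : (-1 : F) ≠ 1) :
    Nat.card (Subgroup.center SL(2, F)) = 2 := by
  have hroot : IsPrimitiveRoot (-1 : F) 2 := by
    simpa [orderOf_eq_prime neg_one_sq hF] using IsPrimitiveRoot.orderOf (-1 : F)
  rw [Nat.card_congr (SpecialLinearGroup.center_equiv_rootsOfUnity' (0 : Fin 2)).toEquiv,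
    Fintype.card_fin, hroot.card_rootsOfUnity]

theorem card_zmod_two_prod_projectiveSpecialLinearGroup [Finite F] (hF : (-1 : F) ≠ 1) :
    Nat.card (Multiplicative (ZMod 2) × ProjectiveSpecialLinearGroup (Fin 2) F) =
      Nat.card F * (Nat.card F ^ 2 - 1) := by
  rw [← card_specialLinearGroup_two, Nat.card_prod,
    Subgroup.card_eq_card_quotient_mul_card_subgroup (Subgroup.center SL(2, F)),
    card_center_specialLinearGroup_two hF, mul_comm,
    Nat.card_eq_fintype_card (α := Multiplicative _), Fintype.card_multiplicative, ZMod.card]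

end Order

section FiniteFields

variable [Fintype F] {m : ℕ}

theorem isSquare_or_isSquare_neg (hF : Fintype.card F = 3 ^ (2 * m + 1)) (a : F) :
    IsSquare a ∨ IsSquare (-a) := by
  classical
  by_contra! h
  have hmod : 3 ^ (2 * m + 1) % 4 = 3 := by
    rw [pow_succ, pow_mul, Nat.mul_mod, Nat.pow_mod]
    norm_num
  have hneg : ¬IsSquare (-1 : F) := by simp [FiniteField.isSquare_neg_one_iff, hF, hmod]
  rw [← neg_one_mul, ← quadraticChar_neg_one_iff_not_isSquare,
    ← quadraticChar_neg_one_iff_not_isSquare, map_mul,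
    quadraticChar_neg_one_iff_not_isSquare.2 hneg] at h
  lia

variable [CharP F 3]

theorem isTits_iterateFrobenius (hF : Fintype.card F = 3 ^ (2 * m + 1)) :
    IsTits (iterateFrobenius F 3 (m + 1)) := by
  intro x
  rw [iterateFrobenius_def, iterateFrobenius_def, ← pow_mul, ← pow_add,
    show m + 1 + (m + 1) = 2 * m + 1 + 1 by ring, pow_succ, pow_mul, ← hF, FiniteField.pow_card]

theorem iterateFrobenius_pow_eq_self (hF : Fintype.card F = 3 ^ (2 * m + 1)) (x : F) :
    iterateFrobenius F 3 (m + 1) x ^ 3 ^ m = x := by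
  rw [iterateFrobenius_def, ← pow_mul, ← pow_add, show m + 1 + m = 2 * m + 1 by ring, ← hF,
    FiniteField.pow_card]

end FiniteFields

section ReeGroup

variable {σ : F →+* F} {t : ℕ}

theorem amat_map (hσt : ∀ x, σ x ^ t = x) (u : F) : amat t (σ u) = alphaMatrix σ u := by
  simp only [amat, alphaMatrix, pow_add, pow_mul', pow_one, hσt]

theorem bmat_map (hσt : ∀ x, σ x ^ t = x) (u : F) : bmat t (σ u) = betaMatrix σ u := by
  simp only [bmat, betaMatrix, pow_add, pow_mul', pow_one, hσt]

theorem cmat_map (hσt : ∀ x, σ x ^ t = x) (u : F) : cmat t (σ u) = gammaMatrix σ u := by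
  simp only [cmat, gammaMatrix, pow_mul', hσt]

theorem hmat_map (hσt : ∀ x, σ x ^ t = x) (κ : Fˣ) :
    hmat t (Units.map σ κ) = torusMatrix σ κ := by
  have hκ : Units.map (σ : F →* F) κ ^ t = κ := Units.ext (hσt κ)
  simp [hmat, torusMatrix, _root_.zpow_sub, _root_.zpow_mul', _root_.zpow_neg, hκ]

theorem reeGroup_eq_group (hσt : ∀ x, σ x ^ t = x) : ReeGroup t = group σ := by
  have hmap (x : F) : x = σ (x ^ t) := by rw [map_pow, hσt]
  refine le_antisymm ((Subgroup.closure_le _).2 ?_) (group_le_iff.2 ⟨?_, ?_, ?_, ?_, ?_⟩)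
  · rintro g (⟨x, hg⟩ | ⟨x, hg⟩ | ⟨x, hg⟩ | ⟨l, hg⟩ | hg)
    · rw [hmap x, amat_map hσt, ← val_alpha] at hg
      exact Units.ext hg ▸ alpha_mem_group _
    · rw [hmap x, bmat_map hσt, ← val_beta] at hg
      exact Units.ext hg ▸ beta_mem_group _
    · rw [hmap x, cmat_map hσt, ← val_gamma] at hg
      exact Units.ext hg ▸ gamma_mem_group _
    · rw [show l = Units.map σ (l ^ t) from Units.ext (hmap l), hmat_map hσt, ← val_torus] at hg
      exact Units.ext hg ▸ torus_mem_group _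
    · rw [← val_weyl] at hg
      exact Units.ext hg ▸ weyl_mem_group
  · exact fun u => Subgroup.subset_closure (.inl ⟨σ u, (amat_map hσt u).symm⟩)
  · exact fun u => Subgroup.subset_closure (.inr <| .inl ⟨σ u, (bmat_map hσt u).symm⟩)
  · exact fun u => Subgroup.subset_closure (.inr <| .inr <| .inl ⟨σ u, (cmat_map hσt u).symm⟩)
  · exact fun κ => Subgroup.subset_closure
      (.inr <| .inr <| .inr <| .inl ⟨Units.map (σ : F →* F) κ, (hmat_map hσt κ).symm⟩)
  · exact Subgroup.subset_closure (.inr <| .inr <| .inr <| .inr rfl)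

end ReeGroup

theorem nonempty_group_inf_centralizer_torus_neg_one_mulEquiv [CharP F 3] {σ : F →+* F}
    (hσ : IsTits σ) (hsq : ∀ a : F, IsSquare a ∨ IsSquare (-a)) :
    Nonempty (↥(group σ ⊓ Subgroup.centralizer {torus σ (-1)}) ≃*
      Multiplicative (ZMod 2) × ProjectiveSpecialLinearGroup (Fin 2) F) := by
  have horder : orderOf (torus σ (-1)) = 2 := orderOf_torus_neg_one
  obtain ⟨e⟩ := nonempty_zpowers_sup_range_mulEquiv
    (disjoint_zpowers_of_notMem (horder ▸ Nat.prime_two) torus_neg_one_notMem_range_slTwo)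
    (commute_torus_neg_one_slTwo σ)
  rw [horder] at e
  rw [group_inf_centralizer_torus_neg_one hσ hsq]
  exact ⟨e.trans (.prodCongr (.refl _) (QuotientGroup.quotientMulEquivOfEq ker_slTwo))⟩

end Ree

theorem involution_centralizer_general {F : Type*} [Field F] [CharP F 3] {σ : F →+* F}
    (hσ : Ree.IsTits σ) (hsq : ∀ a : F, IsSquare a ∨ IsSquare (-a)) {j : GL (Fin 7) F}
    (hj : j ∈ Ree.group σ) (hj2 : orderOf j = 2) :
    Nonempty (↥(Ree.group σ ⊓ Subgroup.centralizer {j}) ≃*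
        Multiplicative (ZMod 2) × ProjectiveSpecialLinearGroup (Fin 2) F) ∧
      (Finite F → Nat.card ↥(Ree.group σ ⊓ Subgroup.centralizer {j}) =
        Nat.card F * (Nat.card F ^ 2 - 1)) := by
  obtain ⟨e⟩ := (Ree.isConjUnder_torus_neg_one hσ hsq hj hj2).nonempty_inf_centralizer_mulEquiv
  obtain ⟨f⟩ := Ree.nonempty_group_inf_centralizer_torus_neg_one_mulEquiv hσ hsq
  refine ⟨⟨e.trans f⟩, fun _ => ?_⟩
  have hneg : (-1 : F) ≠ 1 := by grind
  rw [Nat.card_congr (e.trans f).toEquiv, Ree.card_zmod_two_prod_projectiveSpecialLinearGroup hneg]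

/-- The centralizer in `Ree(q)` of an involution is isomorphic to `(ℤ/2ℤ) × PSL(2, q)`
and has order `q(q^2 - 1)`. -/
theorem involution_centralizer (m : ℕ) (hm : 0 < m) (F : Type*) [Field F] [Fintype F]
    (hF : Fintype.card F = 3 ^ (2 * m + 1)) :
    ∀ j : GL (Fin 7) F, j ∈ ReeGroup (F := F) (3 ^ m) → orderOf j = 2 →
      Nonempty (↥(ReeGroup (F := F) (3 ^ m) ⊓ Subgroup.centralizer {j}) ≃*
        Multiplicative (ZMod 2) × Matrix.ProjectiveSpecialLinearGroup (Fin 2) F) ∧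
      Nat.card ↥(ReeGroup (F := F) (3 ^ m) ⊓ Subgroup.centralizer {j}) =
        3 ^ (2 * m + 1) * ((3 ^ (2 * m + 1)) ^ 2 - 1) := by
  have : Fact (Nat.Prime 3) := ⟨Nat.prime_three⟩
  have : CharP F 3 := charP_of_card_eq_prime_pow hF
  intro j hj hj2
  rw [Ree.reeGroup_eq_group (Ree.iterateFrobenius_pow_eq_self hF)] at hj ⊢
  rw [← hF, ← Nat.card_eq_fintype_card]
  exact (involution_centralizer_general (Ree.isTits_iterateFrobenius hF)
    (Ree.isSquare_or_isSquare_neg hF) hj hj2).imp_right (· inferInstance)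
end
end

section
/- The number of involutions in Ree(q) equals q^2 (q^2 − q + 1). -/
open Matrix


noncomputable section

open ReePaper

/-!
`Ree(q)` acts 2-transitively on the orbit of the point `∞ = ⟨e₀⟩` of `PG(6, q)`, which has
`q ^ 3 + 1` points. This number is even, so an involution fixing a point fixes a second one and is
therefore conjugate to `h(-1)`, which fixes exactly `q + 1` points. The involutions interchanging
`∞` and `0 = ⟨e₆⟩` are the `q - 1` elements `h(λ)Υ`. Counting the ordered pairs of distinct points
which are both fixed, respectively mapped one to the other, by an involution gives
`q N = q ^ 3 (1 + q (q - 1))` for the number `N` of involutions.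

No Bruhat decomposition is needed to control the stabilisers. The generators are automorphisms of
the split octonions which commute, up to a field endomorphism `σ`, with the duality of the split
Cayley hexagon in characteristic `3`. Hence every point of the orbit is absolute with respect to the
polarity induced by `σ` and the duality, which determines it by three of its coordinates, and an
element fixing `∞` and `0` is diagonal.
-/

namespace ReePaper

/-! ### Involutions of 2-transitive groups -/

section Counting

open Finset MulAction

variable {G Ω : Type*} [Group G] [MulAction G Ω]

theorem orderOf_conj (h g : G) : orderOf (h * g * h⁻¹) = orderOf g := by
  rw [← MulAut.conj_apply, MulEquiv.orderOf_eq]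

theorem ncard_fixedBy_conj (h g : G) :
    (fixedBy Ω (h * g * h⁻¹)).ncard = (fixedBy Ω g).ncard := by
  rw [← smul_fixedBy, Set.ncard_smul_set]

theorem exists_conj_fixing_pair [IsMultiplyPretransitive G Ω 2] {a b x y : Ω} (hab : a ≠ b)
    (hxy : x ≠ y) {g : G} (hx : g • x = x) (hy : g • y = y) :
    ∃ h k : G, h * k * h⁻¹ = g ∧ k • a = a ∧ k • b = b := by
  obtain ⟨h, rfl, rfl⟩ := is_two_pretransitive_iff.1 ‹_› hab hxy
  exact ⟨h, h⁻¹ * g * h, by group, by simp [mul_smul, hx], by simp [mul_smul, hy]⟩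

theorem card_involutions_conj [Fintype G] [DecidableEq Ω] (h : G) (x y x' y' : Ω) :
    #{g : G | orderOf g = 2 ∧ g • h • x = h • x' ∧ g • h • y = h • y'} =
      #{g : G | orderOf g = 2 ∧ g • x = x' ∧ g • y = y'} := by
  refine (card_equiv (MulAut.conj h).toEquiv fun g => ?_).symm
  simp [orderOf_conj, mul_smul]

section Fintype

variable [Fintype Ω]

theorem card_offDiag_fixed [DecidableEq Ω] (g : G) :
    #{p ∈ (univ : Finset Ω).offDiag | g • p.1 = p.1 ∧ g • p.2 = p.2} =
      (fixedBy Ω g).ncard * ((fixedBy Ω g).ncard - 1) := by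
  have : ({p ∈ (univ : Finset Ω).offDiag | g • p.1 = p.1 ∧ g • p.2 = p.2} : Finset _) =
      (fixedBy Ω g).toFinset.offDiag := by
    ext p
    simp [and_comm, and_left_comm]
  rw [this, offDiag_card, Set.ncard_eq_toFinset_card', Nat.mul_sub_one]

theorem card_offDiag_moved_add_ncard_fixedBy [DecidableEq Ω] (g : G) :
    #{p ∈ (univ : Finset Ω).offDiag | g • p.1 = p.2} + (fixedBy Ω g).ncard = Fintype.card Ω := by
  have : ({p ∈ (univ : Finset Ω).offDiag | g • p.1 = p.2} : Finset _) =
      (fixedBy Ω g).toFinsetᶜ.image fun x => (x, g • x) := by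
    ext ⟨x, y⟩
    simp only [mem_filter, mem_offDiag, mem_univ, true_and, mem_image, mem_compl,
      Set.mem_toFinset, mem_fixedBy, Prod.mk.injEq]
    exact ⟨fun ⟨hne, h⟩ => ⟨x, fun hx => hne (hx.symm.trans h), rfl, h⟩,
      by rintro ⟨_, hx, rfl, rfl⟩; exact ⟨Ne.symm hx, rfl⟩⟩
  rw [this, card_image_of_injective _ fun x y h => congrArg Prod.fst h,
    Set.ncard_eq_toFinset_card', card_compl_add_card]

theorem card_modEq_ncard_fixedBy {g : G} (hg : orderOf g = 2) :
    Fintype.card Ω ≡ (fixedBy Ω g).ncard [MOD 2] := by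
  classical
  have hinv : (fun x : Ω => g • x)^[2] = id := by
    rw [smul_iterate, ← hg, pow_orderOf_eq_one]
    exact funext (one_smul G)
  have := Equiv.Perm.card_fixedPoints_modEq (p := 2) (n := 1) (f := fun x : Ω => g • x) hinv
  rwa [← Nat.card_eq_fintype_card (α := Function.fixedPoints _)] at this

variable [IsMultiplyPretransitive G Ω 2] {a b : Ω} {z : G} {r s : ℕ}

theorem ncard_fixedBy_of_orderOf_eq_two (hΩ : Even (Fintype.card Ω)) (hab : a ≠ b)
    (hz : ∀ g : G, orderOf g = 2 ∧ g • a = a ∧ g • b = b ↔ g = z)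
    (hr : (fixedBy Ω z).ncard = r + 1) {g : G} (hg : orderOf g = 2) :
    (fixedBy Ω g).ncard = 0 ∨ (fixedBy Ω g).ncard = r + 1 := by
  refine Nat.eq_zero_or_pos _ |>.imp_right fun hpos => ?_
  have heven : Even (fixedBy Ω g).ncard := by
    rw [Nat.even_iff] at hΩ ⊢
    rwa [← card_modEq_ncard_fixedBy hg]
  have hlt : 1 < (fixedBy Ω g).ncard := by grind
  obtain ⟨x, hx, y, hy, hxy⟩ := (Set.one_lt_ncard).1 hlt
  obtain ⟨h, k, rfl, ha, hb⟩ := exists_conj_fixing_pair hab hxy hx hy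
  rw [orderOf_conj] at hg
  rw [ncard_fixedBy_conj, (hz k).1 ⟨hg, ha, hb⟩, hr]

variable [Fintype G]

theorem sum_ncard_fixedBy_mul_pred (hab : a ≠ b)
    (hz : ∀ g : G, orderOf g = 2 ∧ g • a = a ∧ g • b = b ↔ g = z) :
    ∑ g : G with orderOf g = 2, (fixedBy Ω g).ncard * ((fixedBy Ω g).ncard - 1) =
      Fintype.card Ω * (Fintype.card Ω - 1) := by
  classical
  have unique (p) (hp : p ∈ (univ : Finset Ω).offDiag) :
      #{g ∈ {g : G | orderOf g = 2} | g • p.1 = p.1 ∧ g • p.2 = p.2} = 1 := by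
    obtain ⟨h, ha, hb⟩ := is_two_pretransitive_iff.1 ‹_› hab (mem_offDiag.1 hp).2.2
    rw [filter_filter, ← ha, ← hb, card_involutions_conj, card_eq_one]
    exact ⟨z, by ext g; simp [hz]⟩
  simp only [← card_offDiag_fixed]
  rw [Nat.mul_sub_one, ← card_univ, ← offDiag_card, card_eq_sum_ones, ← sum_congr rfl unique]
  exact sum_card_bipartiteAbove_eq_sum_card_bipartiteBelow
    (fun (g : G) (p : Ω × Ω) => g • p.1 = p.1 ∧ g • p.2 = p.2)

theorem sum_card_offDiag_moved [DecidableEq Ω] (hab : a ≠ b)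
    (hs : #{g : G | orderOf g = 2 ∧ g • a = b} = s) :
    ∑ g : G with orderOf g = 2, #{p ∈ (univ : Finset Ω).offDiag | g • p.1 = p.2} =
      Fintype.card Ω * (Fintype.card Ω - 1) * s := by
  have card_swapping (p) (hp : p ∈ (univ : Finset Ω).offDiag) :
      #{g ∈ {g : G | orderOf g = 2} | g • p.1 = p.2} = s := by
    obtain ⟨h, ha, hb⟩ := is_two_pretransitive_iff.1 ‹_› hab (mem_offDiag.1 hp).2.2
    rw [filter_filter, ← ha, ← hb, ← hs]
    simpa only [and_self] using card_involutions_conj h a a b b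
  rw [Nat.mul_sub_one, ← card_univ, ← offDiag_card, ← sum_const_nat card_swapping]
  exact sum_card_bipartiteAbove_eq_sum_card_bipartiteBelow
    (fun (g : G) (p : Ω × Ω) => g • p.1 = p.2)

end Fintype

theorem mul_card_involutions [Finite G] [Finite Ω] [IsMultiplyPretransitive G Ω 2] {a b : Ω}
    {z : G} {r s : ℕ} (hΩ : Even (Nat.card Ω)) (hab : a ≠ b)
    (hz : ∀ g : G, orderOf g = 2 ∧ g • a = a ∧ g • b = b ↔ g = z)
    (hr : (fixedBy Ω z).ncard = r + 1)
    (hs : Nat.card {g : G // orderOf g = 2 ∧ g • a = b} = s) :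
    r * Nat.card {g : G // orderOf g = 2} = (Nat.card Ω - 1) * (1 + r * s) := by
  classical
  have := Fintype.ofFinite G
  have := Fintype.ofFinite Ω
  rw [Nat.card_eq_fintype_card (α := Ω)] at hΩ ⊢
  rw [Nat.subtype_card _ fun g => mem_filter_univ g] at hs ⊢
  set n := Fintype.card Ω
  have hn : 0 < n := Fintype.card_pos_iff.2 ⟨a⟩
  have sum_fixed : r * ∑ g : G with orderOf g = 2, (fixedBy Ω g).ncard = n * (n - 1) := by
    rw [← sum_ncard_fixedBy_mul_pred hab hz, mul_sum]
    refine sum_congr rfl fun g hg => ?_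
    obtain h | h := ncard_fixedBy_of_orderOf_eq_two hΩ hab hz hr (mem_filter_univ g |>.1 hg) <;>
      simp [h, mul_comm]
  have sum_points : n * (n - 1) * s + ∑ g : G with orderOf g = 2, (fixedBy Ω g).ncard =
      #{g : G | orderOf g = 2} * n := by
    rw [← sum_card_offDiag_moved hab hs, ← sum_add_distrib]
    exact sum_const_nat fun g _ => card_offDiag_moved_add_ncard_fixedBy g
  refine mul_left_cancel₀ hn.ne' ?_
  calc n * (r * #{g : G | orderOf g = 2}) = r * (#{g : G | orderOf g = 2} * n) := by ring
    _ = n * (n - 1) * (r * s) + r * ∑ g : G with orderOf g = 2, (fixedBy Ω g).ncard := by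
      rw [← sum_points]; ring
    _ = n * ((n - 1) * (1 + r * s)) := by rw [sum_fixed]; ring

end Counting

/-! ### Split octonions and the duality of the split Cayley hexagon -/

section CommRing

variable {R S : Type*} [CommRing R] [CommRing S]

/-- The Plücker coordinates of the line through `x` and `y`. -/
def plucker (x y : Fin 7 → R) (i j : Fin 7) : R := x i * y j - x j * y i

/-- The product of trace-zero split octonions, whose automorphism group is `G₂`. A pair of singular
points spans a line of the split Cayley hexagon exactly when its product vanishes. -/
def cross (x y : Fin 7 → R) : Fin 7 → R :=
  ![plucker x y 0 3 + plucker x y 1 2,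
    plucker x y 0 4 - plucker x y 1 3,
    -plucker x y 0 5 - plucker x y 2 3,
    plucker x y 0 6 - plucker x y 1 5 - plucker x y 2 4,
    -plucker x y 1 6 - plucker x y 3 4,
    plucker x y 2 6 - plucker x y 3 5,
    plucker x y 3 6 + plucker x y 4 5]

/-- The point which the duality of the split Cayley hexagon in characteristic `3` assigns to the
hexagon line through `x` and `y`; it is only meaningful when `cross x y = 0`. -/
def dualPoint (x y : Fin 7 → R) : Fin 7 → R :=
  ![-plucker x y 0 1,
    -plucker x y 0 2,
    plucker x y 1 4,
    plucker x y 2 4 - plucker x y 1 5,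
    plucker x y 2 5,
    -plucker x y 4 6,
    -plucker x y 5 6]

theorem cross_eq_zero_iff {x y : Fin 7 → R} : cross x y = 0 ↔
    plucker x y 0 3 + plucker x y 1 2 = 0 ∧
    plucker x y 0 4 - plucker x y 1 3 = 0 ∧
    -plucker x y 0 5 - plucker x y 2 3 = 0 ∧
    plucker x y 0 6 - plucker x y 1 5 - plucker x y 2 4 = 0 ∧
    -plucker x y 1 6 - plucker x y 3 4 = 0 ∧
    plucker x y 2 6 - plucker x y 3 5 = 0 ∧
    plucker x y 3 6 + plucker x y 4 5 = 0 := by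
  simp [cross, funext_iff, Fin.forall_fin_succ]

theorem cross_smul_smul (a b : R) (x y : Fin 7 → R) :
    cross (a • x) (b • y) = (a * b) • cross x y := by
  ext i
  fin_cases i <;> simp [cross, plucker] <;> ring

theorem dualPoint_smul_smul (a b : R) (x y : Fin 7 → R) :
    dualPoint (a • x) (b • y) = (a * b) • dualPoint x y := by
  ext i
  fin_cases i <;> simp [dualPoint, plucker] <;> ring

theorem cross_single_zero_left (x : Fin 7 → R) :
    cross (Pi.single 0 1) x = ![x 3, x 4, -x 5, x 6, 0, 0, 0] := by
  ext i
  fin_cases i <;> simp [cross, plucker]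

theorem cross_single_six_right (x : Fin 7 → R) :
    cross x (Pi.single 6 1) = ![0, 0, 0, x 0, -x 1, x 2, x 3] := by
  ext i
  fin_cases i <;> simp [cross, plucker]

theorem dualPoint_single_zero_left (x : Fin 7 → R) :
    dualPoint (Pi.single 0 1) x = ![-x 1, -x 2, 0, 0, 0, 0, 0] := by
  ext i
  fin_cases i <;> simp [dualPoint, plucker]

theorem dualPoint_single_six_right (x : Fin 7 → R) :
    dualPoint x (Pi.single 6 1) = ![0, 0, 0, 0, 0, -x 4, -x 5] := by
  ext i
  fin_cases i <;> simp [dualPoint, plucker]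

theorem cross_smul_left (a : R) (x y : Fin 7 → R) : cross (a • x) y = a • cross x y := by
  simpa only [one_smul, mul_one] using cross_smul_smul a 1 x y

theorem cross_smul_right (a : R) (x y : Fin 7 → R) : cross x (a • y) = a • cross x y := by
  simpa only [one_smul, one_mul] using cross_smul_smul 1 a x y

theorem dualPoint_smul_left (a : R) (x y : Fin 7 → R) :
    dualPoint (a • x) y = a • dualPoint x y := by
  simpa only [one_smul, mul_one] using dualPoint_smul_smul a 1 x y

theorem dualPoint_smul_right (a : R) (x y : Fin 7 → R) :
    dualPoint x (a • y) = a • dualPoint x y := by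
  simpa only [one_smul, one_mul] using dualPoint_smul_smul 1 a x y

/-- `M` is an endomorphism of the split octonions, and `N` describes, through the duality, its
action on the lines of the split Cayley hexagon. -/
structure IsDualPair (M N : Matrix (Fin 7) (Fin 7) R) : Prop where
  cross_mulVec (x y : Fin 7 → R) : cross (M *ᵥ x) (M *ᵥ y) = M *ᵥ cross x y
  dualPoint_mulVec (x y : Fin 7 → R) (hxy : cross x y = 0) :
    dualPoint (M *ᵥ x) (M *ᵥ y) = N *ᵥ dualPoint x y

namespace IsDualPair

variable {M N M' N' : Matrix (Fin 7) (Fin 7) R}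

theorem one : IsDualPair (1 : Matrix (Fin 7) (Fin 7) R) 1 :=
  ⟨fun x y => by simp only [one_mulVec], fun x y _ => by simp only [one_mulVec]⟩

theorem cross_mulVec_eq_zero (h : IsDualPair M N) {x y : Fin 7 → R} (hxy : cross x y = 0) :
    cross (M *ᵥ x) (M *ᵥ y) = 0 := by
  rw [h.cross_mulVec, hxy, mulVec_zero]

theorem mul (h : IsDualPair M N) (h' : IsDualPair M' N') : IsDualPair (M * M') (N * N') where
  cross_mulVec x y := by simp only [← mulVec_mulVec, h.cross_mulVec, h'.cross_mulVec]
  dualPoint_mulVec x y hxy := by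
    simp only [← mulVec_mulVec, h.dualPoint_mulVec _ _ (h'.cross_mulVec_eq_zero hxy),
      h'.dualPoint_mulVec x y hxy]

theorem of_mul_eq_one (h : IsDualPair M N) (hM : M * M' = 1) (hM' : M' * M = 1) (hN : N' * N = 1) :
    IsDualPair M' N' := by
  have cross_eq (x y) : cross (M' *ᵥ x) (M' *ᵥ y) = M' *ᵥ cross x y := by
    have := congrArg (M' *ᵥ ·) (h.cross_mulVec (M' *ᵥ x) (M' *ᵥ y))
    simpa [mulVec_mulVec, hM, hM'] using this.symm
  refine ⟨cross_eq, fun x y hxy => ?_⟩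
  have hxy' : cross (M' *ᵥ x) (M' *ᵥ y) = 0 := by rw [cross_eq, hxy, mulVec_zero]
  have := congrArg (N' *ᵥ ·) (h.dualPoint_mulVec _ _ hxy')
  simpa [mulVec_mulVec, hM, hN] using this.symm

variable {k l a b c : R}

theorem mulVec_single_two (h : IsDualPair M N) (h0 : M *ᵥ Pi.single 0 1 = k • Pi.single 0 1)
    (h5 : M *ᵥ Pi.single 5 1 = ![0, 0, 0, 0, 0, c, b]) :
    M *ᵥ Pi.single 2 1 = ![0, 0, k * c, -(k * b), 0, 0, 0] := by
  have e05 : cross (Pi.single 0 1) (-Pi.single 5 1 : Fin 7 → R) = Pi.single 2 1 := by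
    rw [cross_single_zero_left]
    ext i
    fin_cases i <;> simp
  rw [← e05, ← h.cross_mulVec, h0, mulVec_neg, h5, cross_smul_left, cross_single_zero_left]
  ext i
  fin_cases i <;> simp

theorem mulVec_single_three (h : IsDualPair M N)
    (h0 : M *ᵥ Pi.single 0 1 = k • Pi.single 0 1) (h6 : M *ᵥ Pi.single 6 1 = l • Pi.single 6 1) :
    M *ᵥ Pi.single 3 1 = (k * l) • Pi.single 3 1 := by
  have e06 : cross (Pi.single 0 1) (Pi.single 6 1 : Fin 7 → R) = Pi.single 3 1 := by
    rw [cross_single_zero_left]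
    ext i
    fin_cases i <;> simp
  rw [← e06, ← h.cross_mulVec, h0, h6, cross_smul_smul]

theorem mulVec_single_four (h : IsDualPair M N) (h6 : M *ᵥ Pi.single 6 1 = l • Pi.single 6 1)
    (h1 : M *ᵥ Pi.single 1 1 = ![a, c, 0, 0, 0, 0, 0]) :
    M *ᵥ Pi.single 4 1 = ![0, 0, 0, -(l * a), l * c, 0, 0] := by
  have e16 : cross (-Pi.single 1 1) (Pi.single 6 1 : Fin 7 → R) = Pi.single 4 1 := by
    rw [cross_single_six_right]
    ext i
    fin_cases i <;> simp
  rw [← e16, ← h.cross_mulVec, h6, mulVec_neg, h1, cross_smul_right, cross_single_six_right]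
  ext i
  fin_cases i <;> simp

end IsDualPair

/-- The matrix `α(s)` with `s ^ t` replaced by an independent parameter `u`; the duality takes
matrices of this shape to each other, and likewise for `β` and `γ`. -/
def alphaMatrix (u s : R) : Matrix (Fin 7) (Fin 7) R :=
  !![1, u, 0, 0, -u^3*s, -u^3*s^2, u^4*s^2;
     0, 1, s, u*s, -u^2*s, 0, -u^3*s^2;
     0, 0, 1, u, -u^2, 0, u^3*s;
     0, 0, 0, 1, u, 0, 0;
     0, 0, 0, 0, 1, -s, u*s;
     0, 0, 0, 0, 0, 1, -u;
     0, 0, 0, 0, 0, 0, 1]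

/-- The matrix `β(s)` with `s ^ t` replaced by an independent parameter `u`. -/
def betaMatrix (u s : R) : Matrix (Fin 7) (Fin 7) R :=
  !![1, 0, -u, 0, -s, 0, -u*s;
     0, 1, 0, u, 0, -u^2, 0;
     0, 0, 1, 0, 0, 0, s;
     0, 0, 0, 1, 0, u, 0;
     0, 0, 0, 0, 1, 0, u;
     0, 0, 0, 0, 0, 1, 0;
     0, 0, 0, 0, 0, 0, 1]

/-- The matrix `γ(s)` with `s ^ t` replaced by an independent parameter `u`. -/
def gammaMatrix (u s : R) : Matrix (Fin 7) (Fin 7) R :=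
  !![1, 0, 0, -u, 0, -s, -u^2;
     0, 1, 0, 0, -u, 0, s;
     0, 0, 1, 0, 0, u, 0;
     0, 0, 0, 1, 0, 0, -u;
     0, 0, 0, 0, 1, 0, 0;
     0, 0, 0, 0, 0, 1, 0;
     0, 0, 0, 0, 0, 0, 1]

theorem alphaMatrix_mulVec (u s : R) (x : Fin 7 → R) :
    alphaMatrix u s *ᵥ x = ![x 0 + u * x 1 - u^3 * s * x 4 - u^3 * s^2 * x 5 + u^4 * s^2 * x 6,
      x 1 + s * x 2 + u * s * x 3 - u^2 * s * x 4 - u^3 * s^2 * x 6,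
      x 2 + u * x 3 - u^2 * x 4 + u^3 * s * x 6,
      x 3 + u * x 4,
      x 4 - s * x 5 + u * s * x 6,
      x 5 - u * x 6,
      x 6] := by
  ext i
  fin_cases i <;> simp [alphaMatrix, mulVec_eq_sum, Fin.sum_univ_seven] <;> ring

theorem betaMatrix_mulVec (u s : R) (x : Fin 7 → R) :
    betaMatrix u s *ᵥ x = ![x 0 - u * x 2 - s * x 4 - u * s * x 6, x 1 + u * x 3 - u^2 * x 5,
      x 2 + s * x 6, x 3 + u * x 5, x 4 + u * x 6, x 5, x 6] := by
  ext i
  fin_cases i <;> simp [betaMatrix, mulVec_eq_sum, Fin.sum_univ_seven] <;> ring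

theorem gammaMatrix_mulVec (u s : R) (x : Fin 7 → R) :
    gammaMatrix u s *ᵥ x = ![x 0 - u * x 3 - s * x 5 - u^2 * x 6, x 1 - u * x 4 + s * x 6,
      x 2 + u * x 5, x 3 - u * x 6, x 4, x 5, x 6] := by
  ext i
  fin_cases i <;> simp [gammaMatrix, mulVec_eq_sum, Fin.sum_univ_seven] <;> ring

theorem isDualPair_alphaMatrix [CharP R 3] (u s : R) :
    IsDualPair (alphaMatrix u s) (alphaMatrix s (u ^ 3)) where
  cross_mulVec x y := by
    simp only [alphaMatrix_mulVec, cross, plucker]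
    congrm ![?_, ?_, ?_, ?_, ?_, ?_, ?_] <;> simp only [cons_val] <;> grind
  dualPoint_mulVec x y hxy := by
    simp only [cross_eq_zero_iff, plucker] at hxy
    simp only [alphaMatrix_mulVec, dualPoint, plucker]
    congrm ![?_, ?_, ?_, ?_, ?_, ?_, ?_] <;> simp only [cons_val] <;> grind

theorem isDualPair_betaMatrix [CharP R 3] (u s : R) :
    IsDualPair (betaMatrix u s) (betaMatrix s (u ^ 3)) where
  cross_mulVec x y := by
    simp only [betaMatrix_mulVec, cross, plucker]
    congrm ![?_, ?_, ?_, ?_, ?_, ?_, ?_] <;> simp only [cons_val] <;> grind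
  dualPoint_mulVec x y hxy := by
    simp only [cross_eq_zero_iff, plucker] at hxy
    simp only [betaMatrix_mulVec, dualPoint, plucker]
    congrm ![?_, ?_, ?_, ?_, ?_, ?_, ?_] <;> simp only [cons_val] <;> grind

theorem isDualPair_gammaMatrix [CharP R 3] (u s : R) :
    IsDualPair (gammaMatrix u s) (gammaMatrix s (u ^ 3)) where
  cross_mulVec x y := by
    simp only [gammaMatrix_mulVec, cross, plucker]
    congrm ![?_, ?_, ?_, ?_, ?_, ?_, ?_] <;> simp only [cons_val] <;> grind
  dualPoint_mulVec x y hxy := by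
    simp only [cross_eq_zero_iff, plucker] at hxy
    simp only [gammaMatrix_mulVec, dualPoint, plucker]
    congrm ![?_, ?_, ?_, ?_, ?_, ?_, ?_] <;> simp only [cons_val] <;> grind

theorem det_alphaMatrix (u s : R) : (alphaMatrix u s).det = 1 := by
  rw [det_of_isUpperTriangular]
  · simp [alphaMatrix, Fin.prod_univ_succ]
  · intro i j h
    fin_cases i <;> fin_cases j <;> simp_all [alphaMatrix]

theorem det_betaMatrix (u s : R) : (betaMatrix u s).det = 1 := by
  rw [det_of_isUpperTriangular]
  · simp [betaMatrix, Fin.prod_univ_succ]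
  · intro i j h
    fin_cases i <;> fin_cases j <;> simp_all [betaMatrix]

theorem det_gammaMatrix (u s : R) : (gammaMatrix u s).det = 1 := by
  rw [det_of_isUpperTriangular]
  · simp [gammaMatrix, Fin.prod_univ_succ]
  · intro i j h
    fin_cases i <;> fin_cases j <;> simp_all [gammaMatrix]

theorem map_alphaMatrix (f : R →+* S) (u s : R) :
    (alphaMatrix u s).map f = alphaMatrix (f u) (f s) := by
  ext i j
  fin_cases i <;> fin_cases j <;> simp [alphaMatrix]

theorem map_betaMatrix (f : R →+* S) (u s : R) :
    (betaMatrix u s).map f = betaMatrix (f u) (f s) := by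
  ext i j
  fin_cases i <;> fin_cases j <;> simp [betaMatrix]

theorem map_gammaMatrix (f : R →+* S) (u s : R) :
    (gammaMatrix u s).map f = gammaMatrix (f u) (f s) := by
  ext i j
  fin_cases i <;> fin_cases j <;> simp [gammaMatrix]

variable {σ : R →+* R} {x : Fin 7 → R} {t : ℕ}

variable (σ) in
/-- The automorphisms of the split octonions which commute, up to `σ`, with the duality of the split
Cayley hexagon. -/
def twistedG2 : Subgroup (GL (Fin 7) R) where
  carrier := {g | IsDualPair g.1 (g.1.map σ)}
  one_mem' := by
    simpa only [Set.mem_ofPred_eq, Units.val_one, Matrix.map_one _ (map_zero σ) (map_one σ)]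
      using IsDualPair.one
  mul_mem' {g h} hg hh := by
    simpa only [Set.mem_ofPred_eq, Units.val_mul, Matrix.map_mul] using hg.mul hh
  inv_mem' {g} hg := hg.of_mul_eq_one g.mul_inv g.inv_mul <| by
    rw [← Matrix.map_mul, g.inv_mul, Matrix.map_one _ (map_zero σ) (map_one σ)]

/-- `σ` is a square root of the Frobenius endomorphism in characteristic `3`, and `s ↦ s ^ t` is the
inverse of `σ`. -/
structure IsTitsEndomorphism (σ : R →+* R) (t : ℕ) : Prop where
  map_map (s : R) : σ (σ s) = s ^ 3
  map_pow (s : R) : σ (s ^ t) = s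

theorem IsTitsEndomorphism.pow_pow_three (hσ : IsTitsEndomorphism σ t) (s : R) :
    (s ^ t) ^ 3 = σ s := by
  rw [← hσ.map_map, hσ.map_pow]

theorem IsTitsEndomorphism.pow_map (hσ : IsTitsEndomorphism σ t) (s : R) : σ s ^ t = s := by
  rw [← _root_.map_pow, hσ.map_pow]

/-- `x` spans an absolute point of the polarity obtained from the duality and `σ`: it lies on the
hexagon line through `x` and `y`, whose dual point is `σ ∘ x`. -/
def IsAbsolute (σ : R →+* R) (x : Fin 7 → R) : Prop :=
  ∃ y, cross x y = 0 ∧ dualPoint x y = σ ∘ x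

namespace IsAbsolute

theorem mulVec (hx : IsAbsolute σ x) {g : GL (Fin 7) R} (hg : g ∈ twistedG2 σ) :
    IsAbsolute σ (g.1 *ᵥ x) := by
  obtain ⟨y, hxy, hd⟩ := hx
  refine ⟨g.1 *ᵥ y, IsDualPair.cross_mulVec_eq_zero hg hxy, ?_⟩
  rw [IsDualPair.dualPoint_mulVec hg x y hxy, hd]
  ext i
  exact (σ.map_mulVec g.1 x i).symm

end IsAbsolute

theorem isAbsolute_single_zero : IsAbsolute σ (Pi.single 0 1) :=
  ⟨Pi.single 1 (-1), by
    ext i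
    fin_cases i <;> simp [cross, plucker], by
    ext i
    fin_cases i <;> simp [dualPoint, plucker]⟩

end CommRing

section Field

variable {F : Type*} [Field F]

theorem ups_mulVec (x : Fin 7 → F) :
    ups *ᵥ x = ![-x 6, -x 5, -x 4, -x 3, -x 2, -x 1, -x 0] := by
  ext i
  fin_cases i <;> simp [ups, mulVec_eq_sum, Fin.sum_univ_seven]

theorem isDualPair_ups : IsDualPair (ups : Matrix (Fin 7) (Fin 7) F) ups where
  cross_mulVec x y := by
    simp only [ups_mulVec, cross, plucker]
    congrm ![?_, ?_, ?_, ?_, ?_, ?_, ?_] <;> simp only [cons_val] <;> ring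
  dualPoint_mulVec x y hxy := by
    simp only [cross_eq_zero_iff, plucker] at hxy
    simp only [ups_mulVec, dualPoint, plucker]
    congrm ![?_, ?_, ?_, ?_, ?_, ?_, ?_] <;> simp only [cons_val] <;> grind

theorem ups_mul_ups : (ups : Matrix (Fin 7) (Fin 7) F) * ups = 1 := by
  refine ext_of_mulVec_single fun j => ?_
  rw [← mulVec_mulVec, ups_mulVec, ups_mulVec, one_mulVec]
  ext i
  fin_cases i <;> simp

theorem map_ups {E : Type*} [Field E] (f : F →+* E) :
    (ups : Matrix (Fin 7) (Fin 7) F).map f = ups := by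
  ext i j
  fin_cases i <;> fin_cases j <;> simp [ups]

/-- The matrix `h(s)` with `s ^ t` replaced by an independent parameter `u`. -/
def torusMatrix (u s : F) : Matrix (Fin 7) (Fin 7) F :=
  diagonal ![u, s / u, u ^ 2 / s, 1, s / u ^ 2, u / s, u⁻¹]

theorem torusMatrix_mulVec (u s : F) (x : Fin 7 → F) :
    torusMatrix u s *ᵥ x = ![u * x 0, s / u * x 1, u ^ 2 / s * x 2, x 3, s / u ^ 2 * x 4,
      u / s * x 5, u⁻¹ * x 6] := by
  ext i
  rw [torusMatrix, mulVec_diagonal]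
  fin_cases i <;> simp

theorem isDualPair_torusMatrix {u s : F} (hu : u ≠ 0) (hs : s ≠ 0) :
    IsDualPair (torusMatrix u s) (torusMatrix s (u ^ 3)) where
  cross_mulVec x y := by
    simp only [torusMatrix_mulVec, cross, plucker]
    congrm ![?_, ?_, ?_, ?_, ?_, ?_, ?_] <;> simp only [cons_val] <;> field_simp
  dualPoint_mulVec x y _ := by
    simp only [torusMatrix_mulVec, dualPoint, plucker]
    congrm ![?_, ?_, ?_, ?_, ?_, ?_, ?_] <;> simp only [cons_val] <;> field_simp

theorem torusMatrix_one : torusMatrix 1 1 = (1 : Matrix (Fin 7) (Fin 7) F) := by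
  refine ext_of_mulVec_single fun j => ?_
  rw [torusMatrix_mulVec, one_mulVec]
  ext i
  fin_cases i <;> simp

theorem torusMatrix_mul_torusMatrix (u s u' s' : F) :
    torusMatrix u s * torusMatrix u' s' = torusMatrix (u * u') (s * s') := by
  rw [torusMatrix, torusMatrix, diagonal_mul_diagonal, torusMatrix]
  congr 1
  ext i
  fin_cases i <;> simp [mul_pow, div_mul_div_comm, mul_comm]

theorem map_torusMatrix {E : Type*} [Field E] (f : F →+* E) (u s : F) :
    (torusMatrix u s).map f = torusMatrix (f u) (f s) := by
  rw [torusMatrix, diagonal_map (map_zero f), torusMatrix]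
  congr 1
  ext i
  fin_cases i <;> simp

/-! ### Automorphisms fixing two opposite points -/

namespace IsDualPair

variable {M N : Matrix (Fin 7) (Fin 7) F} {k l s r : F}

theorem mul_eq_one_of_mulVec_single (h : IsDualPair M N)
    (h0 : M *ᵥ Pi.single 0 1 = k • Pi.single 0 1) (h6 : M *ᵥ Pi.single 6 1 = l • Pi.single 6 1)
    (hk : k ≠ 0) : k * l = 1 := by
  have e03 : cross (Pi.single 0 1) (Pi.single 3 1 : Fin 7 → F) = Pi.single 0 1 := by
    rw [cross_single_zero_left]
    ext i
    fin_cases i <;> simp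
  have := h.cross_mulVec (Pi.single 0 1) (Pi.single 3 1)
  rw [h.mulVec_single_three h0 h6, h0, cross_smul_smul, e03, h0] at this
  exact mul_left_cancel₀ hk (by simpa using congrFun this 0)

theorem mulVec_single_one (h : IsDualPair M N) (h0 : M *ᵥ Pi.single 0 1 = k • Pi.single 0 1)
    (hN : N *ᵥ Pi.single 0 1 = s • Pi.single 0 1) (hk : k ≠ 0) :
    ∃ a, M *ᵥ Pi.single 1 1 = ![a, s / k, 0, 0, 0, 0, 0] := by
  have e01 : cross (Pi.single 0 1) (Pi.single 1 1 : Fin 7 → F) = 0 := by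
    simp [cross_single_zero_left]
  have d01 : dualPoint (Pi.single 0 1) (Pi.single 1 1 : Fin 7 → F) = -Pi.single 0 1 := by
    rw [dualPoint_single_zero_left]
    ext i
    fin_cases i <;> simp
  have hcross := h.cross_mulVec_eq_zero e01
  have hdual := h.dualPoint_mulVec _ _ e01
  generalize M *ᵥ Pi.single 1 1 = c at hcross hdual ⊢
  rw [h0, cross_smul_left, cross_single_zero_left] at hcross
  rw [d01, h0, dualPoint_smul_left, dualPoint_single_zero_left, mulVec_neg, hN] at hdual
  obtain ⟨h3, h4, h5, h6⟩ : c 3 = 0 ∧ c 4 = 0 ∧ c 5 = 0 ∧ c 6 = 0 := by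
    simpa [hk] using hcross
  obtain ⟨h1, h2⟩ : k * c 1 = s ∧ c 2 = 0 := by
    simpa [funext_iff, Fin.forall_fin_succ, hk] using hdual
  refine ⟨c 0, ?_⟩
  ext i
  fin_cases i <;> simp [eq_div_iff, mul_comm, *]

theorem mulVec_single_five (h : IsDualPair M N) (h6 : M *ᵥ Pi.single 6 1 = l • Pi.single 6 1)
    (hN : N *ᵥ Pi.single 6 1 = r • Pi.single 6 1) (hl : l ≠ 0) :
    ∃ b, M *ᵥ Pi.single 5 1 = ![0, 0, 0, 0, 0, r / l, b] := by
  have e56 : cross (Pi.single 5 1) (Pi.single 6 1 : Fin 7 → F) = 0 := by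
    simp [cross_single_six_right]
  have d56 : dualPoint (Pi.single 5 1) (Pi.single 6 1 : Fin 7 → F) = -Pi.single 6 1 := by
    rw [dualPoint_single_six_right]
    ext i
    fin_cases i <;> simp
  have hcross := h.cross_mulVec_eq_zero e56
  have hdual := h.dualPoint_mulVec _ _ e56
  generalize M *ᵥ Pi.single 5 1 = c at hcross hdual ⊢
  rw [h6, cross_smul_right, cross_single_six_right] at hcross
  rw [d56, h6, dualPoint_smul_right, dualPoint_single_six_right, mulVec_neg, hN] at hdual
  obtain ⟨h0, h1, h2, h3⟩ : c 0 = 0 ∧ c 1 = 0 ∧ c 2 = 0 ∧ c 3 = 0 := by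
    simpa [hl] using hcross
  obtain ⟨h4, h5⟩ : c 4 = 0 ∧ l * c 5 = r := by
    simpa [funext_iff, Fin.forall_fin_succ, Fin.succ, hl] using hdual
  refine ⟨c 6, ?_⟩
  ext i
  fin_cases i <;> simp [eq_div_iff, mul_comm, *]

theorem eq_torusMatrix (h : IsDualPair M N)
    (hM0 : M *ᵥ Pi.single 0 1 = k • Pi.single 0 1) (hM6 : M *ᵥ Pi.single 6 1 = k⁻¹ • Pi.single 6 1)
    (hN0 : N *ᵥ Pi.single 0 1 = s • Pi.single 0 1) (hN6 : N *ᵥ Pi.single 6 1 = s⁻¹ • Pi.single 6 1)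
    (hk : k ≠ 0) (hs : s ≠ 0) : M = torusMatrix k s := by
  obtain ⟨a, hM1⟩ := h.mulVec_single_one hM0 hN0 hk
  obtain ⟨b, hM5⟩ := h.mulVec_single_five hM6 hN6 (inv_ne_zero hk)
  have hM2 := h.mulVec_single_two hM0 hM5
  have hM3 := h.mulVec_single_three hM0 hM6
  have hM4 := h.mulVec_single_four hM6 hM1
  have ha : a = 0 := by
    have e45 : cross (Pi.single 4 1) (Pi.single 5 1 : Fin 7 → F) = Pi.single 6 1 := by
      ext i
      fin_cases i <;> simp [cross, plucker]
    have := congrFun (h.cross_mulVec (Pi.single 4 1) (Pi.single 5 1)) 5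
    rw [e45, hM4, hM5, hM6] at this
    simpa [cross, plucker, hk, hs] using this
  have hb : b = 0 := by
    have e12 : cross (Pi.single 1 1) (Pi.single 2 1 : Fin 7 → F) = Pi.single 0 1 := by
      ext i
      fin_cases i <;> simp [cross, plucker]
    have := congrFun (h.cross_mulVec (Pi.single 1 1) (Pi.single 2 1)) 1
    rw [e12, hM1, hM2, hM0] at this
    simpa [cross, plucker, hk, hs] using this
  refine ext_of_mulVec_single fun j => ?_
  rw [torusMatrix_mulVec]
  fin_cases j
  · exact hM0.trans (by ext i; fin_cases i <;> simp)
  · exact hM1.trans (by ext i; fin_cases i <;> simp [ha])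
  · exact hM2.trans (by ext i; fin_cases i <;> simp [hb]; field_simp)
  · exact hM3.trans (by ext i; fin_cases i <;> simp [hk])
  · exact hM4.trans (by ext i; fin_cases i <;> simp [ha]; field_simp)
  · exact hM5.trans (by ext i; fin_cases i <;> simp [hb, div_eq_mul_inv, mul_comm])
  · exact hM6.trans (by ext i; fin_cases i <;> simp)

end IsDualPair

/-! ### The Ree group -/

variable {σ : F →+* F} {x : Fin 7 → F} {t : ℕ}

theorem IsTitsEndomorphism.neg_one_pow (hσ : IsTitsEndomorphism σ t) : (-1 : F) ^ t = -1 := by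
  obtain h | h := neg_one_pow_eq_or F t
  · have h1 := hσ.map_pow (-1)
    rw [h, map_one] at h1
    exact h.trans h1
  · exact h

theorem amat_eq_alphaMatrix (s : F) : amat t s = alphaMatrix (s ^ t) s := by
  rw [amat, alphaMatrix]
  congrm !![_, _, _, _, ?_, ?_, ?_; _, _, _, ?_, ?_, _, ?_; _, _, _, _, ?_, _, ?_;
    _, _, _, _, _, _, _; _, _, _, _, _, _, ?_; _, _, _, _, _, _, _; _, _, _, _, _, _, _] <;> ring

theorem bmat_eq_betaMatrix (s : F) : bmat t s = betaMatrix (s ^ t) s := by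
  rw [bmat, betaMatrix]
  congrm !![_, _, _, _, _, _, ?_; _, _, _, _, _, ?_, _; _, _, _, _, _, _, _;
    _, _, _, _, _, _, _; _, _, _, _, _, _, _; _, _, _, _, _, _, _; _, _, _, _, _, _, _] <;> ring

theorem cmat_eq_gammaMatrix (s : F) : cmat t s = gammaMatrix (s ^ t) s := by
  rw [cmat, gammaMatrix]
  congrm !![_, _, _, _, _, _, ?_; _, _, _, _, _, _, _; _, _, _, _, _, _, _;
    _, _, _, _, _, _, _; _, _, _, _, _, _, _; _, _, _, _, _, _, _; _, _, _, _, _, _, _] ; ring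

theorem hmat_eq_torusMatrix (l : Fˣ) : hmat t l = torusMatrix ((l : F) ^ t) (l : F) := by
  rw [hmat, torusMatrix]
  congrm diagonal ![?_, ?_, ?_, ?_, ?_, ?_, ?_] <;>
    simp [_root_.zpow_sub, _root_.zpow_mul', _root_.zpow_neg, div_eq_mul_inv]

theorem reeGroup_le_twistedG2 [CharP F 3] (hσ : IsTitsEndomorphism σ t) :
    ReeGroup t ≤ twistedG2 σ := by
  refine (Subgroup.closure_le _).2 ?_
  rintro g (⟨s, hg⟩ | ⟨s, hg⟩ | ⟨s, hg⟩ | ⟨l, hg⟩ | hg) <;>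
    change IsDualPair g.1 (g.1.map σ) <;> rw [hg]
  · rw [amat_eq_alphaMatrix, map_alphaMatrix, hσ.map_pow, ← hσ.pow_pow_three]
    exact isDualPair_alphaMatrix _ _
  · rw [bmat_eq_betaMatrix, map_betaMatrix, hσ.map_pow, ← hσ.pow_pow_three]
    exact isDualPair_betaMatrix _ _
  · rw [cmat_eq_gammaMatrix, map_gammaMatrix, hσ.map_pow, ← hσ.pow_pow_three]
    exact isDualPair_gammaMatrix _ _
  · rw [hmat_eq_torusMatrix, map_torusMatrix, hσ.map_pow, ← hσ.pow_pow_three]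
    exact isDualPair_torusMatrix (pow_ne_zero _ l.ne_zero) l.ne_zero
  · rw [map_ups]
    exact isDualPair_ups

variable (t) in
/-- `α(s)` as an element of the Ree group. -/
def alpha (s : F) : ReeGroup (F := F) t :=
  ⟨GeneralLinearGroup.mk'' (alphaMatrix (s ^ t) s) (by rw [det_alphaMatrix]; exact isUnit_one),
    Subgroup.subset_closure (Or.inl ⟨s, (amat_eq_alphaMatrix s).symm⟩)⟩

variable (t) in
/-- `β(s)` as an element of the Ree group. -/
def beta (s : F) : ReeGroup (F := F) t :=
  ⟨GeneralLinearGroup.mk'' (betaMatrix (s ^ t) s) (by rw [det_betaMatrix]; exact isUnit_one),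
    Subgroup.subset_closure (Or.inr (Or.inl ⟨s, (bmat_eq_betaMatrix s).symm⟩))⟩

variable (t) in
/-- `γ(s)` as an element of the Ree group. -/
def gamma (s : F) : ReeGroup (F := F) t :=
  ⟨GeneralLinearGroup.mk'' (gammaMatrix (s ^ t) s) (by rw [det_gammaMatrix]; exact isUnit_one),
    Subgroup.subset_closure (Or.inr (Or.inr (Or.inl ⟨s, (cmat_eq_gammaMatrix s).symm⟩)))⟩

variable (t) in
/-- The homomorphism `λ ↦ h(λ)` to the Ree group. -/
def torus : Fˣ →* ReeGroup (F := F) t :=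
  (MonoidHom.toHomUnits
    { toFun (l : Fˣ) := torusMatrix ((l : F) ^ t) (l : F)
      map_one' := by rw [Units.val_one, one_pow, torusMatrix_one]
      map_mul' l l' := by
        rw [Units.val_mul, torusMatrix_mul_torusMatrix, _root_.mul_pow] }).codRestrict (ReeGroup t)
    fun l => Subgroup.subset_closure
      (Or.inr (Or.inr (Or.inr (Or.inl ⟨l, (hmat_eq_torusMatrix l).symm⟩))))

variable (t) in
/-- `Υ` as an element of the Ree group. -/
def upsilon : ReeGroup (F := F) t :=
  ⟨⟨ups, ups, ups_mul_ups, ups_mul_ups⟩,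
    Subgroup.subset_closure (Or.inr (Or.inr (Or.inr (Or.inr rfl))))⟩

theorem upsilon_mul_upsilon : (upsilon t : ReeGroup (F := F) t) * upsilon t = 1 :=
  Subtype.ext (Units.ext ups_mul_ups)

theorem coe_torus (l : Fˣ) :
    ((torus t l : GL (Fin 7) F) : Matrix (Fin 7) (Fin 7) F) = torusMatrix ((l : F) ^ t) (l : F) :=
  rfl

theorem upsilon_mul_torus_mul_upsilon (l : Fˣ) :
    upsilon t * torus t l * upsilon t = torus t l⁻¹ := by
  refine Subtype.ext (Units.ext (ext_of_mulVec_single fun j => ?_))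
  change (ups * torusMatrix _ _ * ups) *ᵥ _ = torusMatrix _ _ *ᵥ _
  rw [← mulVec_mulVec, ← mulVec_mulVec, ups_mulVec, torusMatrix_mulVec, ups_mulVec,
    torusMatrix_mulVec]
  ext i
  fin_cases i <;> simp [mul_comm, div_eq_mul_inv]

theorem torus_injective (hσ : IsTitsEndomorphism σ t) :
    Function.Injective (torus t : Fˣ → ReeGroup (F := F) t) := by
  intro l l' h
  have h00 : (l : F) ^ t = (l' : F) ^ t := by
    simpa [coe_torus, torusMatrix] using congrArg (fun g : ReeGroup (F := F) t => g.1.1 0 0) h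
  rw [Units.ext_iff, ← hσ.map_pow l, h00, hσ.map_pow]

theorem exists_torus_eq [CharP F 3] (hσ : IsTitsEndomorphism σ t) {g : ReeGroup (F := F) t}
    {k l : F} (hk : k ≠ 0) (h0 : g.1.1 *ᵥ Pi.single 0 1 = k • Pi.single 0 1)
    (h6 : g.1.1 *ᵥ Pi.single 6 1 = l • Pi.single 6 1) : ∃ u, torus t u = g := by
  have hg : IsDualPair g.1.1 (g.1.1.map σ) := reeGroup_le_twistedG2 hσ g.2
  have hl : l = k⁻¹ := eq_inv_of_mul_eq_one_right (hg.mul_eq_one_of_mulVec_single h0 h6 hk)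
  have map_mulVec_single {j : Fin 7} {c : F}
      (h : g.1.1 *ᵥ Pi.single j 1 = c • Pi.single j 1) :
      g.1.1.map σ *ᵥ Pi.single j 1 = σ c • Pi.single j 1 := by
    ext i
    simpa [Pi.single_apply, apply_ite σ] using congrArg σ (congrFun h i)
  have hM := hg.eq_torusMatrix h0 (hl ▸ h6) (map_mulVec_single h0)
    (by rw [map_mulVec_single h6, hl, map_inv₀]) hk (by simpa using hk)
  refine ⟨Units.mk0 (σ k) (by simpa using hk), Subtype.ext (Units.ext ?_)⟩
  rw [coe_torus, Units.val_mk0, hM, hσ.pow_map]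

/-! ### The Ree ovoid -/

namespace IsAbsolute

theorem smul (hx : IsAbsolute σ x) {k : F} (hk : k ≠ 0) : IsAbsolute σ (k • x) := by
  obtain ⟨y, hxy, hd⟩ := hx
  refine ⟨(σ k / k) • y, by rw [cross_smul_smul, hxy, smul_zero], ?_⟩
  rw [dualPoint_smul_smul, hd, mul_div_cancel₀ _ hk]
  ext i
  simp

theorem eq_smul_single_zero (hx : IsAbsolute σ x) (h6 : x 6 = 0) :
    x = x 0 • Pi.single 0 1 := by
  obtain ⟨y, hxy, hd⟩ := hx
  have eq_zero (i) : dualPoint x y i = 0 ↔ x i = 0 := by simp [hd]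
  have d1 := eq_zero 1
  have d2 := eq_zero 2
  have d3 := eq_zero 3
  have d4 := eq_zero 4
  have d5 := eq_zero 5
  have d6 := eq_zero 6
  simp only [cross_eq_zero_iff, plucker] at hxy
  simp only [dualPoint, plucker, cons_val] at d1 d2 d3 d4 d5 d6
  have h5 : x 5 = 0 := by grind
  have h4 : x 4 = 0 := by grind
  have h3 : x 3 = 0 := by grind
  have h2 : x 2 = 0 := by grind
  have h1 : x 1 = 0 := by grind
  ext i
  fin_cases i <;> simp [*]

theorem eq_single_six (hx : IsAbsolute σ x) (h3 : x 3 = 0) (h4 : x 4 = 0) (h5 : x 5 = 0)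
    (h6 : x 6 = 1) : x = Pi.single 6 1 := by
  obtain ⟨y, hxy, hd⟩ := hx
  have eq_zero (i) : dualPoint x y i = 0 ↔ x i = 0 := by simp [hd]
  have d6 : dualPoint x y 6 = 1 := by simp [hd, h6]
  have d0 := eq_zero 0
  have d1 := eq_zero 1
  have d2 := eq_zero 2
  have d3 := eq_zero 3
  have d4 := eq_zero 4
  have d5 := eq_zero 5
  simp only [cross_eq_zero_iff, plucker] at hxy
  simp only [dualPoint, plucker, cons_val] at d0 d1 d2 d3 d4 d5 d6
  have : y 5 = 1 := by grind
  have h2 : x 2 = 0 := by grind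
  have h1 : x 1 = 0 := by grind
  have h0 : x 0 = 0 := by grind
  ext i
  fin_cases i <;> simp [*]

end IsAbsolute

open scoped LinearAlgebra.Projectivization
open MulAction

variable (F) in
/-- The point `∞ = ⟨e₀⟩` of the Ree ovoid. -/
def pointInfty : ℙ F (Fin 7 → F) := .mk F (Pi.single 0 1) (by simp)

variable (F) in
/-- The point `0 = ⟨e₆⟩` of the Ree ovoid. -/
def pointZero : ℙ F (Fin 7 → F) := .mk F (Pi.single 6 1) (by simp)

theorem reeGroup_smul_mk (g : ReeGroup (F := F) t) {v : Fin 7 → F} (hv : v ≠ 0) :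
    ∃ h, g • Projectivization.mk F v hv = .mk F (g.1.1 *ᵥ v) h :=
  ⟨_, Projectivization.smul_mk g hv⟩

theorem smul_mk_eq_mk_iff {g : ReeGroup (F := F) t} {v w : Fin 7 → F} {hv : v ≠ 0} {hw : w ≠ 0} :
    g • Projectivization.mk F v hv = .mk F w hw ↔ ∃ k : F, k ≠ 0 ∧ g.1.1 *ᵥ v = k • w := by
  obtain ⟨_, h'⟩ := reeGroup_smul_mk g hv
  rw [h', Projectivization.mk_eq_mk_iff]
  exact ⟨fun ⟨k, hk⟩ => ⟨k, k.ne_zero, hk.symm⟩, fun ⟨k, hk, h⟩ => ⟨.mk0 k hk, h.symm⟩⟩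

open scoped Classical in
/-- The affine coordinates `x₃ / x₆`, `x₄ / x₆`, `x₅ / x₆` of a vector, or `none` if `x₆ = 0`. On
absolute points they determine the remaining coordinates up to scaling, and `α`, `β`, `γ` and `h`
act on them without involving those coordinates. -/
def affineChart (v : Fin 7 → F) : Option (F × F × F) :=
  if v 6 = 0 then none else some (v 3 / v 6, v 4 / v 6, v 5 / v 6)

theorem affineChart_smul {k : F} (hk : k ≠ 0) (v : Fin 7 → F) :
    affineChart (k • v) = affineChart v := by
  by_cases h6 : v 6 = 0 <;> simp [affineChart, h6, hk, mul_div_mul_left]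

theorem affineChart_alphaMatrix_mulVec (u s : F) (v : Fin 7 → F) :
    affineChart (alphaMatrix u s *ᵥ v) = (affineChart v).map
      fun d => (d.1 + u * d.2.1, d.2.1 - s * d.2.2 + u * s, d.2.2 - u) := by
  by_cases h6 : v 6 = 0
  · simp [alphaMatrix_mulVec, affineChart, h6]
  · simp only [alphaMatrix_mulVec, affineChart, cons_val, h6, if_false, Option.map_some,
      Option.some.injEq, Prod.mk.injEq]
    grind

theorem affineChart_betaMatrix_mulVec (u s : F) (v : Fin 7 → F) :
    affineChart (betaMatrix u s *ᵥ v) = (affineChart v).map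
      fun d => (d.1 + u * d.2.2, d.2.1 + u, d.2.2) := by
  by_cases h6 : v 6 = 0
  · simp [betaMatrix_mulVec, affineChart, h6]
  · simp only [betaMatrix_mulVec, affineChart, cons_val, h6, if_false, Option.map_some,
      Option.some.injEq, Prod.mk.injEq]
    grind

theorem affineChart_gammaMatrix_mulVec (u s : F) (v : Fin 7 → F) :
    affineChart (gammaMatrix u s *ᵥ v) = (affineChart v).map fun d => (d.1 - u, d.2) := by
  by_cases h6 : v 6 = 0
  · simp [gammaMatrix_mulVec, affineChart, h6]
  · simp only [gammaMatrix_mulVec, affineChart, cons_val, h6, if_false, Option.map_some,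
      Option.some.injEq, Prod.mk.injEq]
    grind

theorem affineChart_torusMatrix_mulVec {u : F} (hu : u ≠ 0) (s : F) (v : Fin 7 → F) :
    affineChart (torusMatrix u s *ᵥ v) = (affineChart v).map
      fun d => (u * d.1, s / u * d.2.1, u ^ 2 / s * d.2.2) := by
  by_cases h6 : v 6 = 0
  · simp [torusMatrix_mulVec, affineChart, h6]
  · simp only [torusMatrix_mulVec, affineChart, cons_val, mul_eq_zero, inv_eq_zero, hu, h6, or_self,
      if_false, Option.map_some, Option.some.injEq, Prod.mk.injEq]
    grind

namespace IsAbsolute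

theorem eq_smul_single_of_affineChart_eq_none (hx : IsAbsolute σ x) (h : affineChart x = none) :
    x = x 0 • Pi.single 0 1 :=
  hx.eq_smul_single_zero (by simpa [affineChart] using h)

theorem eq_smul_single_of_affineChart_eq_some_zero (hx : IsAbsolute σ x)
    (h : affineChart x = some 0) : x = x 6 • Pi.single 6 1 := by
  obtain ⟨h6, h345⟩ : x 6 ≠ 0 ∧ x 3 = 0 ∧ x 4 = 0 ∧ x 5 = 0 := by
    unfold affineChart at h
    split_ifs at h; simp_all [Prod.ext_iff]
  rw [← (hx.smul (inv_ne_zero h6)).eq_single_six, smul_inv_smul₀ h6] <;> simp [*]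

end IsAbsolute

/-- The map induced by `affineChart` on projective points. -/
def chart (p : ℙ F (Fin 7 → F)) : Option (F × F × F) :=
  p.lift (fun v : {v : Fin 7 → F // v ≠ 0} => affineChart v.1) <| by
    rintro ⟨v, hv⟩ ⟨w, hw⟩ k (rfl : v = k • w)
    exact affineChart_smul (fun hk => hv (by simp [hk])) w

theorem chart_mk {v : Fin 7 → F} (hv : v ≠ 0) : chart (.mk F v hv) = affineChart v :=
  rfl

theorem chart_pointInfty : chart (pointInfty F) = none := by
  simp [pointInfty, chart_mk, affineChart]

theorem chart_pointZero : chart (pointZero F) = some 0 := by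
  simp [pointZero, chart_mk, affineChart]

theorem chart_smul {g : ReeGroup (F := F) t} {f : F × F × F → F × F × F}
    (h : ∀ v, affineChart (g.1.1 *ᵥ v) = (affineChart v).map f) (p : ℙ F (Fin 7 → F)) :
    chart (g • p) = (chart p).map f := by
  induction p with | h v hv
  obtain ⟨_, hmk⟩ := reeGroup_smul_mk g hv
  rw [hmk, chart_mk, chart_mk, h]

theorem pointZero_ne_pointInfty : pointZero F ≠ pointInfty F := fun h => by
  simpa [chart_pointInfty, chart_pointZero] using congrArg chart h

theorem torus_smul_pointInfty (l : Fˣ) : torus t l • pointInfty F = pointInfty F :=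
  smul_mk_eq_mk_iff.2 ⟨l ^ t, by simp, by
    rw [coe_torus, torusMatrix_mulVec]
    ext i
    fin_cases i <;> simp⟩

theorem torus_smul_pointZero (l : Fˣ) : torus t l • pointZero F = pointZero F :=
  smul_mk_eq_mk_iff.2 ⟨((l : F) ^ t)⁻¹, by simp, by
    rw [coe_torus, torusMatrix_mulVec]
    ext i
    fin_cases i <;> simp⟩

theorem upsilon_smul_pointInfty :
    (upsilon t : ReeGroup (F := F) t) • pointInfty F = pointZero F :=
  smul_mk_eq_mk_iff.2 ⟨-1, by simp, by
    change ups *ᵥ _ = _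
    rw [ups_mulVec]
    ext i
    fin_cases i <;> simp⟩

theorem upsilon_smul_pointZero :
    (upsilon t : ReeGroup (F := F) t) • pointZero F = pointInfty F := by
  rw [← upsilon_smul_pointInfty (t := t), smul_smul, upsilon_mul_upsilon, one_smul]

theorem exists_torus_eq_of_smul_eq [CharP F 3] (hσ : IsTitsEndomorphism σ t)
    {g : ReeGroup (F := F) t} (h0 : g • pointInfty F = pointInfty F)
    (h6 : g • pointZero F = pointZero F) : ∃ l, torus t l = g := by
  obtain ⟨k, hk, hg0⟩ := smul_mk_eq_mk_iff.1 h0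
  obtain ⟨l, -, hg6⟩ := smul_mk_eq_mk_iff.1 h6
  exact exists_torus_eq hσ hk hg0 hg6

theorem exists_chart_smul (hσ : IsTitsEndomorphism σ t) (d d' : F × F × F) :
    ∃ (g : ReeGroup (F := F) t) (f : F × F × F → F × F × F),
      (∀ p, chart (g • p) = (chart p).map f) ∧ f d = d' := by
  have pow_surjective (u : F) : ∃ s, s ^ t = u := ⟨σ u, hσ.pow_map u⟩
  obtain ⟨a, ha⟩ := pow_surjective (d.2.2 - d'.2.2)
  obtain ⟨b, hb⟩ := pow_surjective (d'.2.1 - (d.2.1 - a * d.2.2 + a ^ t * a))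
  obtain ⟨c, hc⟩ := pow_surjective (d.1 + a ^ t * d.2.1 + b ^ t * d'.2.2 - d'.1)
  refine ⟨gamma t c * beta t b * alpha t a,
    ((fun d => (d.1 - c ^ t, d.2)) ∘ fun d => (d.1 + b ^ t * d.2.2, d.2.1 + b ^ t, d.2.2)) ∘
      fun d => (d.1 + a ^ t * d.2.1, d.2.1 - a * d.2.2 + a ^ t * a, d.2.2 - a ^ t), fun p => ?_, ?_⟩
  · rw [mul_smul, mul_smul, chart_smul (affineChart_gammaMatrix_mulVec (c ^ t) c),
      chart_smul (affineChart_betaMatrix_mulVec (b ^ t) b),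
      chart_smul (affineChart_alphaMatrix_mulVec (a ^ t) a), Option.map_map, Option.map_map]
  · ext <;> simp only [Function.comp_apply] <;> grind

variable (t F) in
/-- The Ree ovoid, as the orbit of `∞`. -/
abbrev ovoid : Set (ℙ F (Fin 7 → F)) := orbit (ReeGroup (F := F) t) (pointInfty F)

theorem pointZero_mem_ovoid : pointZero F ∈ ovoid F t :=
  ⟨upsilon t, upsilon_smul_pointInfty⟩

theorem exists_isAbsolute_mk_eq [CharP F 3] (hσ : IsTitsEndomorphism σ t) {p : ℙ F (Fin 7 → F)}
    (hp : p ∈ ovoid F t) : ∃ v hv, IsAbsolute σ v ∧ p = .mk F v hv := by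
  obtain ⟨g, rfl⟩ := hp
  obtain ⟨hv, h⟩ := reeGroup_smul_mk g (v := Pi.single 0 1) (by simp)
  exact ⟨_, hv, isAbsolute_single_zero.mulVec (reeGroup_le_twistedG2 hσ g.2), h⟩

theorem eq_pointInfty_of_chart_eq_none [CharP F 3] (hσ : IsTitsEndomorphism σ t)
    {p : ℙ F (Fin 7 → F)} (hp : p ∈ ovoid F t) (h : chart p = none) : p = pointInfty F := by
  obtain ⟨v, hv, hx, rfl⟩ := exists_isAbsolute_mk_eq hσ hp
  exact (Projectivization.mk_eq_mk_iff' ..).2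
    ⟨_, (hx.eq_smul_single_of_affineChart_eq_none h).symm⟩

theorem eq_pointZero_of_chart_eq_some_zero [CharP F 3] (hσ : IsTitsEndomorphism σ t)
    {p : ℙ F (Fin 7 → F)} (hp : p ∈ ovoid F t) (h : chart p = some 0) : p = pointZero F := by
  obtain ⟨v, hv, hx, rfl⟩ := exists_isAbsolute_mk_eq hσ hp
  exact (Projectivization.mk_eq_mk_iff' ..).2
    ⟨_, (hx.eq_smul_single_of_affineChart_eq_some_zero h).symm⟩

theorem injOn_chart_ovoid [CharP F 3] (hσ : IsTitsEndomorphism σ t) :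
    Set.InjOn chart (ovoid F t) := by
  intro p hp p' hp' h
  cases hd : chart p with
  | none =>
    rw [eq_pointInfty_of_chart_eq_none hσ hp hd, eq_pointInfty_of_chart_eq_none hσ hp' (h ▸ hd)]
  | some d =>
    obtain ⟨g, f, hg, hf⟩ := exists_chart_smul hσ d 0
    have smul_eq {p} (hp : p ∈ ovoid F t) (hd : chart p = some d) : g • p = pointZero F :=
      eq_pointZero_of_chart_eq_some_zero hσ (mem_orbit_of_mem_orbit g hp)
        (by rw [hg, hd, Option.map_some, hf])
    exact smul_left_cancel g ((smul_eq hp hd).trans (smul_eq hp' (h ▸ hd)).symm)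

theorem surjOn_chart_ovoid (hσ : IsTitsEndomorphism σ t) :
    Set.SurjOn chart (ovoid F t) Set.univ := by
  rintro (_ | d) -
  · exact ⟨_, mem_orbit_self _, chart_pointInfty⟩
  · obtain ⟨g, f, hg, hf⟩ := exists_chart_smul hσ 0 d
    refine ⟨_, mem_orbit_of_mem_orbit g pointZero_mem_ovoid, ?_⟩
    rw [hg, chart_pointZero, Option.map_some, hf]

/-- The Ree ovoid identified with affine `3`-space and a point at infinity. -/
def chartEquiv [CharP F 3] (hσ : IsTitsEndomorphism σ t) : ovoid F t ≃ Option (F × F × F) :=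
  (Set.BijOn.equiv _ ⟨Set.mapsTo_univ _ _, injOn_chart_ovoid hσ, surjOn_chart_ovoid hσ⟩).trans
    (Equiv.Set.univ _)

theorem card_ovoid [Finite F] [CharP F 3] (hσ : IsTitsEndomorphism σ t) :
    Nat.card (ovoid F t) = Nat.card F ^ 3 + 1 := by
  rw [Nat.card_congr (chartEquiv hσ), Finite.card_option, Nat.card_prod, Nat.card_prod]
  ring

theorem isMultiplyPretransitive_ovoid [CharP F 3] (hσ : IsTitsEndomorphism σ t) :
    IsMultiplyPretransitive (ReeGroup (F := F) t) (ovoid F t) 2 := by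
  have exists_smul_eq {p p' : ovoid F t} (hne : p ≠ p') :
      ∃ g : ReeGroup (F := F) t, g • pointInfty F = p ∧ g • pointZero F = p' := by
    obtain ⟨⟨_, g, rfl⟩, p', hp'⟩ := p, p'
    have hp₀ : g⁻¹ • p' ∈ ovoid F t := mem_orbit_of_mem_orbit g⁻¹ hp'
    obtain ⟨d, hd⟩ : ∃ d, chart (g⁻¹ • p') = some d := by
      refine Option.ne_none_iff_exists'.1 fun h => hne (Subtype.ext ?_)
      exact (inv_smul_eq_iff.1 (eq_pointInfty_of_chart_eq_none hσ hp₀ h)).symm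
    obtain ⟨u, f, hu, hf⟩ := exists_chart_smul hσ 0 d
    have hu0 : u • pointInfty F = pointInfty F :=
      eq_pointInfty_of_chart_eq_none hσ (mem_orbit _ _) (by rw [hu, chart_pointInfty]; rfl)
    have hu6 : u • pointZero F = g⁻¹ • p' :=
      injOn_chart_ovoid hσ (mem_orbit_of_mem_orbit u pointZero_mem_ovoid) hp₀
        (by rw [hu, chart_pointZero, hd, Option.map_some, hf])
    exact ⟨g * u, by rw [mul_smul, hu0], by rw [mul_smul, hu6, smul_inv_smul]⟩
  refine is_two_pretransitive_iff.2 fun {a b c d} hab hcd => ?_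
  obtain ⟨g, hga, hgb⟩ := exists_smul_eq hab
  obtain ⟨g', hgc, hgd⟩ := exists_smul_eq hcd
  refine ⟨g' * g⁻¹, Subtype.ext ?_, Subtype.ext ?_⟩ <;> rw [orbit.coe_smul, mul_smul]
  · rw [← hga, inv_smul_smul, hgc]
  · rw [← hgb, inv_smul_smul, hgd]

theorem ringChar_ne_two {R : Type*} [CommRing R] [CharP R 3] : ringChar R ≠ 2 := by
  rw [ringChar.eq R 3]
  decide

theorem orderOf_units_eq_two_iff {R : Type*} [CommRing R] [IsDomain R] (hR : ringChar R ≠ 2)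
    {u : Rˣ} : orderOf u = 2 ↔ u = -1 := by
  constructor
  · intro h
    obtain ⟨hsq, hne⟩ := orderOf_eq_prime_iff.1 h
    have hu : (u : R) = 1 ∨ (u : R) = -1 :=
      sq_eq_one_iff.1 (by rw [← Units.val_pow_eq_pow_val, hsq, Units.val_one])
    exact Units.ext (hu.resolve_left fun h1 => hne (Units.ext h1))
  · rintro rfl
    rw [← orderOf_units, Units.val_neg, Units.val_one, orderOf_neg_one, if_neg hR]

theorem orderOf_torus (hσ : IsTitsEndomorphism σ t) (l : Fˣ) :
    orderOf (torus t l : ReeGroup (F := F) t) = orderOf l :=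
  orderOf_injective _ (torus_injective hσ) l

theorem orderOf_eq_two_and_smul_eq_iff [CharP F 3] (hσ : IsTitsEndomorphism σ t)
    (g : ReeGroup (F := F) t) :
    orderOf g = 2 ∧ g • pointInfty F = pointInfty F ∧ g • pointZero F = pointZero F ↔
      g = torus t (-1) := by
  constructor
  · rintro ⟨hg, h0, h6⟩
    obtain ⟨l, rfl⟩ := exists_torus_eq_of_smul_eq hσ h0 h6
    rw [(orderOf_units_eq_two_iff ringChar_ne_two).1 ((orderOf_torus hσ l).symm.trans hg)]
  · rintro rfl
    exact ⟨(orderOf_torus hσ _).trans ((orderOf_units_eq_two_iff ringChar_ne_two).2 rfl),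
      torus_smul_pointInfty _, torus_smul_pointZero _⟩

theorem setOf_orderOf_eq_two_and_smul_eq [CharP F 3] (hσ : IsTitsEndomorphism σ t) :
    {g : ReeGroup (F := F) t | orderOf g = 2 ∧ g • pointInfty F = pointZero F} =
      Set.range fun l : Fˣ => torus t l * upsilon t := by
  ext g
  constructor
  · rintro ⟨hg, h0⟩
    have h6 : g • pointZero F = pointInfty F := by
      rw [← h0, smul_smul, ← sq, ← hg, pow_orderOf_eq_one, one_smul]
    obtain ⟨l, hl⟩ := exists_torus_eq_of_smul_eq hσ (g := g * upsilon t)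
      (by rw [mul_smul, upsilon_smul_pointInfty, h6])
      (by rw [mul_smul, upsilon_smul_pointZero, h0])
    exact ⟨l, by dsimp only; rw [hl, mul_assoc, upsilon_mul_upsilon, mul_one]⟩
  · rintro ⟨l, rfl⟩
    have h0 : (torus t l * upsilon t) • pointInfty F = pointZero F := by
      rw [mul_smul, upsilon_smul_pointInfty, torus_smul_pointZero]
    refine ⟨orderOf_eq_prime ?_ fun h => ?_, h0⟩
    · rw [sq, ← mul_assoc, mul_assoc (torus t l), mul_assoc (torus t l),
        upsilon_mul_torus_mul_upsilon, ← map_mul, mul_inv_cancel, map_one]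
    · rw [show torus t l * upsilon t = 1 from h, one_smul] at h0
      simpa [chart_pointInfty, chart_pointZero] using congrArg chart h0

theorem card_involutions_swap [Finite F] [CharP F 3] (hσ : IsTitsEndomorphism σ t) :
    Nat.card {g : ReeGroup (F := F) t // orderOf g = 2 ∧ g • pointInfty F = pointZero F} =
      Nat.card F - 1 := by
  have := Fintype.ofFinite F
  calc
    _ = Nat.card (Set.range fun l : Fˣ => (torus t l * upsilon t : ReeGroup (F := F) t)) := by
      rw [← setOf_orderOf_eq_two_and_smul_eq hσ]; rfl
    _ = Nat.card Fˣ :=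
      Nat.card_range_of_injective ((mul_left_injective _).comp (torus_injective hσ))
    _ = _ := Nat.card_units F

theorem fixedBy_torus_neg_one [CharP F 3] (hσ : IsTitsEndomorphism σ t) :
    fixedBy (ovoid F t) (torus t (-1) : ReeGroup (F := F) t) =
      chartEquiv hσ ⁻¹' Set.range (Option.map fun b => (0, b, 0)) := by
  have eq_zero (a : F) : -a = a ↔ a = 0 := Ring.eq_self_iff_eq_zero_of_char_ne_two ringChar_ne_two
  ext ⟨p, hp⟩
  have hsmul := chart_smul (g := torus t (-1))
    (affineChart_torusMatrix_mulVec (u := ((-1 : Fˣ) : F) ^ t) (by simp) ((-1 : Fˣ) : F)) p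
  rw [Units.val_neg, Units.val_one, hσ.neg_one_pow] at hsmul
  rw [mem_fixedBy, Subtype.ext_iff, orbit.coe_smul,
    ← (injOn_chart_ovoid hσ).eq_iff (mem_orbit_of_mem_orbit _ hp) hp, hsmul]
  change _ ↔ chart p ∈ Set.range _
  cases chart p with
  | none => simp
  | some d =>
    obtain ⟨a, b, c⟩ := d
    simp only [neg_mul, one_mul, ne_eq, neg_eq_zero, one_ne_zero, not_false_eq_true, div_self,
      even_two, Even.neg_pow, one_pow, div_neg_self, Option.map_some, Option.some.injEq,
      Prod.mk.injEq, eq_zero, true_and, Set.mem_range, Option.map_eq_some_iff, ↓existsAndEq,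
      exists_eq_left]
    grind

theorem ncard_fixedBy_torus_neg_one [Finite F] [CharP F 3] (hσ : IsTitsEndomorphism σ t) :
    (fixedBy (ovoid F t) (torus t (-1) : ReeGroup (F := F) t)).ncard = Nat.card F + 1 := by
  have hinj : Function.Injective fun b : F => ((0, b, 0) : F × F × F) :=
    fun b b' h => congrArg (·.2.1) h
  rw [fixedBy_torus_neg_one hσ, Set.ncard_preimage_of_injective_subset_range
    (chartEquiv hσ).injective (by simp), Set.ncard_range_of_injective
    (Option.map_injective hinj), Finite.card_option]

theorem card_involutions_reeGroup [Finite F] [CharP F 3] (hσ : IsTitsEndomorphism σ t) :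
    Nat.card {g : ReeGroup (F := F) t // orderOf g = 2} =
      Nat.card F ^ 2 * (Nat.card F ^ 2 - Nat.card F + 1) := by
  have := Fintype.ofFinite F
  have := isMultiplyPretransitive_ovoid hσ
  have odd_card : Odd (Nat.card F) := by
    rw [Nat.card_eq_fintype_card, Nat.odd_iff]
    exact FiniteField.odd_card_of_char_ne_two ringChar_ne_two
  have smul_eq_iff (g : ReeGroup (F := F) t) (p p' : ovoid F t) :
      g • p = p' ↔ g • (p : ℙ F (Fin 7 → F)) = p' := Subtype.ext_iff
  have key := mul_card_involutions (G := ReeGroup (F := F) t) (Ω := ovoid F t)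
    (a := ⟨_, mem_orbit_self _⟩) (b := ⟨_, pointZero_mem_ovoid⟩)
    (by rw [card_ovoid hσ]; exact odd_card.pow.add_one)
    (fun h => pointZero_ne_pointInfty (congrArg Subtype.val h).symm)
    (by simpa only [smul_eq_iff] using orderOf_eq_two_and_smul_eq_iff hσ)
    (ncard_fixedBy_torus_neg_one hσ)
    (by simpa only [smul_eq_iff] using card_involutions_swap hσ)
  refine mul_left_cancel₀ (Nat.card_pos (α := F)).ne' (key.trans ?_)
  rw [card_ovoid hσ, Nat.add_sub_cancel, sq (Nat.card F), ← Nat.mul_sub_one]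
  ring

theorem isTitsEndomorphism_iterateFrobenius [Fintype F] [CharP F 3] {m : ℕ}
    (hF : Fintype.card F = 3 ^ (2 * m + 1)) :
    IsTitsEndomorphism (iterateFrobenius F 3 (m + 1)) (3 ^ m) where
  map_map s := by
    rw [iterateFrobenius_def, iterateFrobenius_def, ← pow_mul, ← pow_add,
      show m + 1 + (m + 1) = (2 * m + 1) + 1 by ring, pow_succ, ← hF, pow_mul,
      FiniteField.pow_card]
  map_pow s := by
    rw [iterateFrobenius_def, ← pow_mul, ← pow_add, show m + (m + 1) = 2 * m + 1 by ring, ← hF,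
      FiniteField.pow_card]

end Field

end ReePaper

/-- The number of involutions in `Ree(q)` equals `q^2 (q^2 - q + 1)`. -/
theorem involution_count (m : ℕ) (hm : 0 < m) (F : Type*) [Field F] [Fintype F]
    (hF : Fintype.card F = 3 ^ (2 * m + 1)) :
    Nat.card {g : GL (Fin 7) F // g ∈ ReeGroup (F := F) (3 ^ m) ∧ orderOf g = 2} =
      (3 ^ (2 * m + 1)) ^ 2 * ((3 ^ (2 * m + 1)) ^ 2 - 3 ^ (2 * m + 1) + 1) := by
  have : CharP F 3 := charP_of_card_eq_prime_pow hF
  calc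
    _ = Nat.card {g : ReeGroup (F := F) (3 ^ m) // orderOf g.1 = 2} :=
      (Nat.card_congr (Equiv.subtypeSubtypeEquivSubtypeInter _ _)).symm
    _ = Nat.card {g : ReeGroup (F := F) (3 ^ m) // orderOf g = 2} := by
      simp only [Subgroup.orderOf_coe]
    _ = _ := by
      rw [card_involutions_reeGroup (isTitsEndomorphism_iterateFrobenius hF),
        Nat.card_eq_fintype_card, hF]
end
end
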